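/- arXiv:1911.01250 — 5 statements merged into one kernel-verified Lean document; each statement's English description precedes it below -/
import Mathlib

section
/- The polynomial p has degree 2k−1, p(0) = 0, and all roots of p are real and nonpositive. Moreover, if s₀ ≥ s₁ ≥ ⋯ ≥ s_{2k−2} is the list of the roots of p with multiplicity in nonincreasing order, then s₀ = 0 and s_{2j} > s_{2j+1} strictly for every j = 0,1,…,k−2; that is, 0 = s₀ > s₁ ≥ s₂ > s₃ ≥ s₄ > ⋯ > s_{2k−3} ≥ s_{2k−2}. In particular every root of p has multiplicity at most 2. -/
open Polynomial Matrix

/-- The matrix `A_m(z)` with rows `(z + α β⁻¹, α + β)` and `(z(α⁻¹+β⁻¹), z + β α⁻¹)`. -/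
noncomputable def aztecA (a b : ℝ) (z : ℂ) : Matrix (Fin 2) (Fin 2) ℂ :=
  !![z + (a : ℂ) * ((b : ℂ))⁻¹, (a : ℂ) + (b : ℂ);
     z * (((a : ℂ))⁻¹ + ((b : ℂ))⁻¹), z + (b : ℂ) * ((a : ℂ))⁻¹]

/-- `T(z) = A_1(z) A_2(z) ⋯ A_k(z)`. -/
noncomputable def aztecT {k : ℕ} (α β : Fin k → ℝ) (z : ℂ) : Matrix (Fin 2) (Fin 2) ℂ :=
  (List.ofFn fun m => aztecA (α m) (β m) z).prod

/-!
Let `w ^ 2 = z` with `0 < Re w`, which is possible exactly when `z ∉ (-∞, 0]`, and let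
`Q v = Re (w v₀ v̄₁)`, an indefinite Hermitian form. If `z ≠ 1`, each `A_m(z)` satisfies
`|z - 1| ^ 2 * Q v < Q (A_m(z) v)` for `v ≠ 0`, so `T(z)` has no eigenvalue of modulus
`|z - 1| ^ k`. Since `det T(z) = (z - 1) ^ (2 * k)`, such an eigenvalue exists whenever `z` is a
zero of `F = Tr T` or of the discriminant `p = F ^ 2 - 4 * (X - 1) ^ (2 * k)`, and neither vanishes
at `1`. Hence all zeros of `F` and `p` lie in `(-∞, 0]`.

At a double zero `x` of `p` the logarithmic derivatives of `F` and `(X - 1) ^ k` agree. As `F` has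
only real zeros, none of them at `1`, the strict Laguerre inequality
`k * F * F'' < (k - 1) * F' ^ 2` at `x` then gives `p'' x < 0`. So every multiple zero of `p` is a
strict local maximum, hence double. The leading coefficient of `p` is positive, so if
`s_{2j} = s_{2j+1}`, then `p`, having an even number of zeros to the right of this double zero,
would be nonnegative just beside it.
-/

section MatrixProducts

lemma mul_apply_self_of_blockTriangular {n ι R : Type*} [Fintype n] [LinearOrder ι] [Semiring R]
    {b : n → ι} (hb : Function.Injective b) {M N : Matrix n n R} (hM : M.BlockTriangular b)
    (hN : N.BlockTriangular b) (i : n) : (M * N) i i = M i i * N i i := by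
  rw [Matrix.mul_apply]
  refine Fintype.sum_eq_single i fun j hj => ?_
  rcases (hb.ne hj).lt_or_gt with h | h
  · rw [hM h, zero_mul]
  · rw [hN h, mul_zero]

variable {n R : Type*} [Fintype n] [DecidableEq n]

lemma list_prod_apply_self_of_blockTriangular {ι : Type*} [LinearOrder ι] [Semiring R] {b : n → ι}
    (hb : Function.Injective b) {L : List (Matrix n n R)} (hL : ∀ M ∈ L, M.BlockTriangular b)
    (i : n) : L.prod i i = (L.map fun M => M i i).prod := by
  induction L with
  | nil => simp
  | cons M L ih =>
    rw [List.forall_mem_cons] at hL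
    have hprod : L.prod.BlockTriangular b :=
      list_prod_mem (S := blockTriangularSubsemiring R b) hL.2
    rw [List.prod_cons, mul_apply_self_of_blockTriangular hb hL.1 hprod, ih hL.2, List.map_cons,
      List.prod_cons]

lemma natDegree_matPolyEquiv_le [CommSemiring R] {M : Matrix n n R[X]} {d : ℕ}
    (hM : ∀ i j, (M i j).natDegree ≤ d) : (matPolyEquiv M).natDegree ≤ d :=
  natDegree_le_iff_coeff_eq_zero.2 fun m hm => by
    ext i j
    rw [matPolyEquiv_coeff_apply, coeff_eq_zero_of_natDegree_lt ((hM i j).trans_lt hm),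
      Matrix.zero_apply]

variable [CommSemiring R] {L : List (Matrix n n R[X])} {d : ℕ}

lemma natDegree_list_prod_apply_le (hL : ∀ M ∈ L, ∀ i j, (M i j).natDegree ≤ d) (i j : n) :
    (L.prod i j).natDegree ≤ L.length * d := by
  induction L generalizing i j with
  | nil =>
    rw [List.prod_nil, Matrix.one_apply]
    split_ifs <;> simp
  | cons M L ih =>
    rw [List.forall_mem_cons] at hL
    rw [List.prod_cons, Matrix.mul_apply, List.length_cons, Nat.succ_mul, add_comm]
    exact natDegree_sum_le_of_forall_le _ _ fun l _ =>
      natDegree_mul_le_of_le (hL.1 _ _) (ih hL.2 _ _)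

lemma coeff_list_prod_apply (hL : ∀ M ∈ L, ∀ i j, (M i j).natDegree ≤ d) (i j : n) :
    (L.prod i j).coeff (L.length * d) = (L.map fun M => M.map (coeff · d)).prod i j := by
  have hcoeff (M : Matrix n n R[X]) : (matPolyEquiv M).coeff d = M.map (coeff · d) := by
    ext i j
    exact matPolyEquiv_coeff_apply M d i j
  have hL' : ∀ P ∈ L.map matPolyEquiv, P.natDegree ≤ d := by
    simpa using fun M hM => natDegree_matPolyEquiv_le (hL M hM)
  have h := coeff_list_prod_of_natDegree_le _ d hL'
  rw [List.length_map, ← map_list_prod, List.map_map] at h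
  rw [← matPolyEquiv_coeff_apply, h]
  simp only [Function.comp_def, hcoeff]

end MatrixProducts

section Expansion

variable {n R : Type*} [Fintype n] [DecidableEq n] [Semiring R]

lemma pow_length_mul_lt_apply_list_prod_mulVec {Q : (n → R) → ℝ} (hQ : Q 0 = 0) {c : ℝ} (hc : 0 < c)
    {L : List (Matrix n n R)} (hL₀ : L ≠ []) (hL : ∀ A ∈ L, ∀ v ≠ 0, c * Q v < Q (A *ᵥ v))
    {v : n → R} (hv : v ≠ 0) : c ^ L.length * Q v < Q (L.prod *ᵥ v) := by
  induction L with
  | nil => exact absurd rfl hL₀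
  | cons A L ih =>
    rw [List.forall_mem_cons] at hL
    have hA : ∀ u, c * Q u ≤ Q (A *ᵥ u) := fun u => by
      rcases eq_or_ne u 0 with rfl | hu
      · simp [hQ]
      · exact (hL.1 u hu).le
    rcases eq_or_ne L [] with rfl | hne
    · simpa using hL.1 v hv
    calc c ^ (A :: L).length * Q v = c * (c ^ L.length * Q v) := by
          rw [List.length_cons, pow_succ', mul_assoc]
      _ < c * Q (L.prod *ᵥ v) := mul_lt_mul_of_pos_left (ih hne hL.2) hc
      _ ≤ Q (A *ᵥ (L.prod *ᵥ v)) := hA _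
      _ = Q ((A :: L).prod *ᵥ v) := by rw [mulVec_mulVec, List.prod_cons]

end Expansion

lemma exists_mulVec_eq_smul_of_isRoot_charpoly {n K : Type*} [Fintype n] [DecidableEq n] [Field K]
    {M : Matrix n n K} {μ : K} (hμ : M.charpoly.IsRoot μ) : ∃ v ≠ 0, M *ᵥ v = μ • v := by
  rw [← charpoly_toLin', ← Module.End.hasEigenvalue_iff_isRoot_charpoly] at hμ
  obtain ⟨v, hv⟩ := hμ.exists_hasEigenvector
  exact ⟨v, hv.2, by simpa using hv.apply_eq_smul⟩

lemma notMem_slitPlane_iff {z : ℂ} : z ∉ Complex.slitPlane ↔ z.im = 0 ∧ z.re ≤ 0 := by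
  rw [Complex.mem_slitPlane_iff, not_or, not_lt, ne_eq, not_not, and_comm]

lemma exists_sq_eq_of_mem_slitPlane {z : ℂ} (hz : z ∈ Complex.slitPlane) :
    ∃ w : ℂ, 0 < w.re ∧ w ^ 2 = z := by
  obtain ⟨w, rfl⟩ := IsAlgClosed.exists_pow_nat_eq z two_pos
  rcases lt_trichotomy w.re 0 with h | h | h
  · exact ⟨-w, by simpa using h, by ring⟩
  · simp [Complex.mem_slitPlane_iff, pow_two, h, (mul_self_nonneg w.im).not_gt] at hz
  · exact ⟨w, h, rfl⟩

lemma splits_of_forall_aeval_complex {p : ℝ[X]} (hp : ∀ z : ℂ, aeval z p = 0 → z.im = 0) :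
    p.Splits := by
  refine Splits.of_splits_map (algebraMap ℝ ℂ) (IsAlgClosed.splits _) fun z hz => ?_
  have hz' : aeval z p = 0 := by
    rw [← eval_map_algebraMap]
    exact (mem_roots'.1 hz).2
  exact ⟨z.re, Complex.ext rfl (hp z hz').symm⟩

section Laguerre

lemma sq_sum_lt_card_mul_sum_sq {R : Type*} [CommRing R] [LinearOrder R] [IsStrictOrderedRing R]
    {s : Multiset R} {a : R} (ha : a ∈ s) (hne : s.card * a ≠ s.sum) :
    s.sum ^ 2 < s.card * (s.map (· ^ 2)).sum := by
  have hvar : (s.map fun x => (s.card * x - s.sum) ^ 2).sum =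
      s.card * (s.card * (s.map (· ^ 2)).sum - s.sum ^ 2) := by
    have hexp (x : R) : (s.card * x - s.sum) ^ 2 =
        s.card ^ 2 * x ^ 2 - 2 * s.card * s.sum * x + s.sum ^ 2 := by ring
    have hlin (b : R) : (s.map fun x => b * x).sum = b * s.sum := by
      rw [Multiset.sum_map_mul_left, Multiset.map_id']
    simp only [hexp, Multiset.sum_map_add, Multiset.sum_map_sub, Multiset.sum_map_mul_left,
      Multiset.map_const', Multiset.sum_replicate, hlin, nsmul_eq_mul]
    ring
  have hpos : 0 < (s.map fun x => (s.card * x - s.sum) ^ 2).sum := by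
    refine (sq_pos_of_ne_zero (sub_ne_zero.2 hne)).trans_le
      (Multiset.single_le_sum ?_ _ (Multiset.mem_map_of_mem _ ha))
    simp only [Multiset.mem_map]
    rintro _ ⟨x, -, rfl⟩
    exact sq_nonneg _
  rw [hvar] at hpos
  exact sub_pos.1 (pos_of_mul_pos_right hpos (Nat.cast_nonneg _))

variable {K : Type*} [Field K]

lemma eval_mul_eval_derivative_derivative_prod_X_sub_C {s : Multiset K} {x : K} (hx : x ∉ s) :
    (s.map fun r => X - C r).prod.eval x *
        (derivative (derivative (s.map fun r => X - C r).prod)).eval x =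
      (derivative (s.map fun r => X - C r).prod).eval x ^ 2 -
        (s.map fun r => X - C r).prod.eval x ^ 2 * (s.map fun r => (1 / (x - r)) ^ 2).sum := by
  induction s using Multiset.induction with
  | empty => simp
  | cons r s ih =>
    rw [Multiset.mem_cons, not_or] at hx
    have hr : x - r ≠ 0 := sub_ne_zero.2 hx.1
    have hinv : (x - r) ^ 2 * (1 / (x - r)) ^ 2 = 1 := by field_simp
    simp only [Multiset.map_cons, Multiset.prod_cons, Multiset.sum_cons, derivative_mul,
      derivative_X_sub_C, derivative_add, eval_add, eval_mul, one_mul, eval_sub, eval_X, eval_C]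
    linear_combination (x - r) ^ 2 * ih hx.2 +
      (s.map fun r => X - C r).prod.eval x ^ 2 * hinv

lemma eval_mul_eval_derivative_derivative_of_splits {F : K[X]} (hF : F.Splits) {x : K}
    (hx : F.eval x ≠ 0) :
    F.eval x * (derivative (derivative F)).eval x =
      (derivative F).eval x ^ 2 -
        F.eval x ^ 2 * (F.roots.map fun r => (1 / (x - r)) ^ 2).sum := by
  have hroots : x ∉ F.roots := fun h => hx (mem_roots'.1 h).2
  have hP := eval_mul_eval_derivative_derivative_prod_X_sub_C hroots
  set Q := (F.roots.map fun r => (1 / (x - r)) ^ 2).sum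
  rw [hF.eq_prod_roots]
  simp only [derivative_C_mul, eval_C_mul]
  linear_combination F.leadingCoeff ^ 2 * hP

variable [LinearOrder K] [IsStrictOrderedRing K]

lemma laguerre_inequality_of_splits {F : K[X]} (hF : F.Splits) {x r : K} (hx : F.eval x ≠ 0)
    (hr : F.IsRoot r) (hne : F.natDegree * F.eval x ≠ (x - r) * (derivative F).eval x) :
    F.natDegree * (F.eval x * (derivative (derivative F)).eval x) <
      (F.natDegree - 1) * (derivative F).eval x ^ 2 := by
  have hmem : r ∈ F.roots := (mem_roots (by rintro rfl; simp at hx)).2 hr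
  have hxr : x - r ≠ 0 := sub_ne_zero.2 (by rintro rfl; exact hx hr)
  have h₁ := hF.eval_derivative_eq_eval_mul_sum hx
  have h₂ := eval_mul_eval_derivative_derivative_of_splits hF hx
  have hcs := sq_sum_lt_card_mul_sum_sq (s := F.roots.map fun r => 1 / (x - r))
    (Multiset.mem_map_of_mem _ hmem) (by
      rw [Multiset.card_map, ← hF.natDegree_eq_card_roots]
      intro h
      apply hne
      rw [h₁, ← h]
      field_simp)
  rw [Multiset.map_map, Multiset.card_map, ← hF.natDegree_eq_card_roots] at hcs
  simp only [Function.comp_def] at hcs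
  have hmul := mul_lt_mul_of_pos_left hcs (pow_pos (abs_pos.2 hx) 2)
  rw [sq_abs] at hmul
  rw [h₂, h₁]
  linarith

end Laguerre

section DoubleRoots

lemma X_sub_C_mul_derivative_pow {R : Type*} [CommRing R] (c : R) (N : ℕ) :
    (X - C c) * derivative ((X - C c) ^ N) = (N : R[X]) * (X - C c) ^ N := by
  rcases N with _ | N
  · simp
  · rw [derivative_X_sub_C_pow, Nat.add_sub_cancel]
    simp only [map_natCast]
    ring

lemma X_sub_C_sq_mul_derivative_derivative_pow {R : Type*} [CommRing R] (c : R) (N : ℕ) :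
    (X - C c) ^ 2 * derivative (derivative ((X - C c) ^ N)) =
      (N * (N - 1) : R[X]) * (X - C c) ^ N := by
  have h₁ := X_sub_C_mul_derivative_pow c N
  have h₂ := congrArg derivative h₁
  rw [derivative_mul, derivative_mul, derivative_natCast, derivative_X_sub_C] at h₂
  linear_combination (X - C c) * h₂ + (N - 1 : R[X]) * h₁

lemma sub_mul_eval_derivative_of_sq_sub_pow_eq_sq_mul {K : Type*} [Field K] [CharZero K]
    {F q : K[X]} {n : ℕ} {a c x : K}
    (h : F ^ 2 - C a * (X - C c) ^ (2 * n) = (X - C x) ^ 2 * q) (hx : F.eval x ≠ 0) :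
    (x - c) * (derivative F).eval x = n * F.eval x ∧
      (x - c) ^ 2 * q.eval x =
        (x - c) ^ 2 * (F.eval x * (derivative (derivative F)).eval x) -
          n * (n - 1) * F.eval x ^ 2 := by
  have hG₁ := congrArg (eval x) (X_sub_C_mul_derivative_pow c (2 * n))
  have hG₂ := congrArg (eval x) (X_sub_C_sq_mul_derivative_derivative_pow c (2 * n))
  set G := (X - C c) ^ (2 * n)
  simp only [eval_mul, eval_pow, eval_sub, eval_X, eval_C, eval_natCast, eval_one] at hG₁ hG₂
  push_cast at hG₁ hG₂
  have h₀ : F.eval x ^ 2 = a * G.eval x := by simpa [sub_eq_zero] using congrArg (eval x) h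
  have h₁ : 2 * F.eval x * (derivative F).eval x = a * (derivative G).eval x := by
    simpa [derivative_pow, sub_eq_zero] using congrArg (eval x ∘ derivative) h
  have h₂ : 2 * (derivative F).eval x * (derivative F).eval x +
      2 * F.eval x * (derivative (derivative F)).eval x -
        a * (derivative (derivative G)).eval x = 2 * q.eval x := by
    simpa [derivative_pow, sub_eq_zero] using congrArg (eval x ∘ derivative ∘ derivative) h
  have hlog : (x - c) * (derivative F).eval x = n * F.eval x := mul_left_cancel₀ hx (by
    linear_combination (x - c) / 2 * h₁ + a / 2 * hG₁ - n * h₀)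
  refine ⟨hlog, ?_⟩
  linear_combination - (x - c) ^ 2 / 2 * h₂ - a / 2 * hG₂ +
    ((x - c) * (derivative F).eval x + n * F.eval x) * hlog + n * (2 * n - 1) * h₀

lemma eval_neg_of_sq_sub_pow_eq_sq_mul {K : Type*} [Field K] [LinearOrder K]
    [IsStrictOrderedRing K] {F q : K[X]} (hF : F.Splits) (hdeg : F.natDegree ≠ 0) {a c x : K}
    (ha : a ≠ 0) (hc : F.eval c ≠ 0)
    (h : F ^ 2 - C a * (X - C c) ^ (2 * F.natDegree) = (X - C x) ^ 2 * q) : q.eval x < 0 := by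
  have hx : F.eval x ≠ 0 := fun hFx => by
    have hxc : x - c = 0 := by simpa [hFx, ha, hdeg] using congrArg (eval x) h
    exact hc (sub_eq_zero.1 hxc ▸ hFx)
  obtain ⟨hlog, hq⟩ := sub_mul_eval_derivative_of_sq_sub_pow_eq_sq_mul h hx
  have hn : 0 < (F.natDegree : K) := Nat.cast_pos.2 hdeg.pos
  have hnF : F.natDegree * F.eval x ≠ 0 := mul_ne_zero hn.ne' hx
  have hxc : x - c ≠ 0 := fun hxc => hnF (by rw [← hlog, hxc, zero_mul])
  have hF' : (derivative F).eval x ≠ 0 := fun hF' => hnF (by rw [← hlog, hF', mul_zero])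
  obtain ⟨r, hr⟩ := hF.exists_eval_eq_zero (degree_ne_of_natDegree_ne hdeg)
  have hne : F.natDegree * F.eval x ≠ (x - r) * (derivative F).eval x := fun heq => hc (by
    rw [← hlog] at heq
    rwa [← sub_right_injective (mul_right_cancel₀ hF' heq)] at hr)
  have hlag := mul_lt_mul_of_pos_left (laguerre_inequality_of_splits hF hx hr hne)
    (sq_pos_of_ne_zero hxc)
  have hneg : (F.natDegree * (x - c) ^ 2) * q.eval x < 0 := by
    linear_combination hlag + F.natDegree * hq +
      (F.natDegree - 1) * ((x - c) * (derivative F).eval x + F.natDegree * F.eval x) * hlog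
  exact neg_of_mul_neg_right hneg (by positivity)

end DoubleRoots

section Ordering

lemma prod_Iio_sub_nonneg_of_antitone {R : Type*} [CommRing R] [LinearOrder R]
    [IsStrictOrderedRing R] {n : ℕ} {s : Fin n → R} (hs : Antitone s) {i : Fin n}
    (hi : Even (i : ℕ)) : 0 ≤ ∏ l ∈ Finset.Iio i, (s i - s l) := by
  have hneg : ∏ l ∈ Finset.Iio i, (s i - s l) = ∏ l ∈ Finset.Iio i, (s l - s i) := by
    rw [Finset.prod_congr rfl fun l _ => (neg_sub (s l) (s i)).symm, Finset.prod_neg,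
      Fin.card_Iio, hi.neg_one_pow, one_mul]
  rw [hneg]
  exact Finset.prod_nonneg fun l hl => sub_nonneg.2 (hs (Finset.mem_Iio.1 hl).le)

lemma prod_univ_eq_mul_prod_Iio_mul_prod_Ioi {M : Type*} [CommMonoid M] {n : ℕ} {i j : Fin n}
    (hj : (j : ℕ) = i + 1) (f : Fin n → M) :
    ∏ l, f l = f i * f j * ((∏ l ∈ Finset.Iio i, f l) * ∏ l ∈ Finset.Ioi j, f l) := by
  have huniv : Finset.univ =
      insert i (insert j (Finset.Iio i ∪ Finset.Ioi j)) := by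
    ext l
    simp only [Finset.mem_univ, Finset.mem_insert, Finset.mem_union, Finset.mem_Iio,
      Finset.mem_Ioi, Fin.ext_iff, Fin.lt_def, true_iff]
    omega
  have hdisj : Disjoint (Finset.Iio i) (Finset.Ioi j) := by
    rw [Finset.disjoint_left]
    intro l hl hl'
    rw [Finset.mem_Iio, Fin.lt_def] at hl
    rw [Finset.mem_Ioi, Fin.lt_def] at hl'
    omega
  rw [huniv, Finset.prod_insert, Finset.prod_insert, Finset.prod_union hdisj, mul_assoc]
  all_goals
    simp only [Finset.mem_insert, Finset.mem_union, Finset.mem_Iio, Finset.mem_Ioi, Fin.ext_iff,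
      Fin.lt_def]
    omega

lemma lt_of_antitone_of_roots_eq {K : Type*} [Field K] [LinearOrder K] [IsStrictOrderedRing K]
    {p : K[X]} (hp : p.Splits) (hlead : 0 < p.leadingCoeff)
    (hmax : ∀ x q, p = (X - C x) ^ 2 * q → q.eval x < 0) {n : ℕ} {s : Fin n → K} (hs : Antitone s)
    (hroots : Multiset.map s Finset.univ.val = p.roots) {i j : Fin n} (hi : Even (i : ℕ))
    (hj : (j : ℕ) = i + 1) : s j < s i := by
  refine (hs (Fin.le_def.2 (by omega))).lt_of_ne fun heq => ?_
  set q := C p.leadingCoeff *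
    ((∏ l ∈ Finset.Iio i, (X - C (s l))) * ∏ l ∈ Finset.Ioi j, (X - C (s l))) with hq
  have hfac : p = (X - C (s i)) ^ 2 * q := by
    conv_lhs => rw [hp.eq_prod_roots, ← hroots, Multiset.map_map, Finset.prod_map_val]
    rw [Function.comp_def, prod_univ_eq_mul_prod_Iio_mul_prod_Ioi hj, heq]
    ring
  have hIoi : 0 ≤ ∏ l ∈ Finset.Ioi j, (s i - s l) :=
    Finset.prod_nonneg fun l hl => sub_nonneg.2 (heq ▸ hs (Finset.mem_Ioi.1 hl).le)
  refine (hmax _ _ hfac).not_ge ?_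
  simp only [hq, eval_mul, eval_C, eval_prod, eval_sub, eval_X]
  exact mul_nonneg hlead.le (mul_nonneg (prod_Iio_sub_nonneg_of_antitone hs hi) hIoi)

lemma rootMultiplicity_le_two {R : Type*} [CommRing R] [Preorder R] {p : R[X]}
    (hmax : ∀ x q, p = (X - C x) ^ 2 * q → q.eval x < 0) (x : R) : p.rootMultiplicity x ≤ 2 := by
  by_contra! hmul
  obtain ⟨q, hq⟩ := (pow_dvd_pow (X - C x) hmul).trans (pow_rootMultiplicity_dvd p x)
  have h := hmax x ((X - C x) * q) (by rw [hq]; ring)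
  simp at h

lemma apply_zero_eq_of_antitone {α : Type*} [PartialOrder α] {n : ℕ} (hn : 0 < n) {s : Fin n → α}
    (hs : Antitone s) {x : α} (hx : IsGreatest (Set.range s) x) : s ⟨0, hn⟩ = x := by
  obtain ⟨⟨l, rfl⟩, hle⟩ := hx
  exact (hle ⟨_, rfl⟩).antisymm (hs (Fin.mk_le_of_le_val l.val.zero_le))

end Ordering

section Coefficients

lemma coeff_list_prod_apply_nonneg {n R : Type*} [Fintype n] [DecidableEq n] [Semiring R]
    [PartialOrder R] [IsOrderedRing R] {L : List (Matrix n n R[X])}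
    (hL : ∀ M ∈ L, ∀ i j m, 0 ≤ (M i j).coeff m) (i j : n) (m : ℕ) : 0 ≤ (L.prod i j).coeff m := by
  have hmem (q : R[X]) : q ∈ lifts (Subsemiring.nonneg R).subtype ↔ ∀ m, 0 ≤ q.coeff m := by
    simp [lifts_iff_coeff_lifts]
  have hprod : L.prod ∈ (lifts (Subsemiring.nonneg R).subtype).matrix :=
    list_prod_mem fun M hM i j => (hmem _).2 (hL M hM i j)
  exact (hmem _).1 (hprod i j) m

lemma natDegree_C_mul_pow_X_sub_C_le {R : Type*} [Ring R] (a c : R) (n : ℕ) :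
    (C a * (X - C c) ^ n).natDegree ≤ n := by
  simpa using (natDegree_C_mul_le a _).trans (natDegree_pow_le_of_le n (natDegree_X_sub_C_le c))

lemma coeff_pow_X_sub_C_self {R : Type*} [Ring R] (c : R) (n : ℕ) :
    ((X - C c) ^ n).coeff n = 1 := by
  rw [sub_eq_add_neg, ← C_neg, coeff_X_add_C_pow, Nat.sub_self, pow_zero, Nat.choose_self,
    Nat.cast_one, one_mul]

lemma coeff_pow_X_sub_C_pred {R : Type*} [Ring R] (c : R) {n : ℕ} (hn : 1 ≤ n) :
    ((X - C c) ^ n).coeff (n - 1) = -c * n := by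
  rw [sub_eq_add_neg, ← C_neg, coeff_X_add_C_pow, Nat.sub_sub_self hn, pow_one, Nat.choose_symm hn,
    Nat.choose_one_right]

end Coefficients

/-- The matrix `aztecA a b z` with the variable `X` in place of `z`. -/
noncomputable def aztecPoly (a b : ℝ) : Matrix (Fin 2) (Fin 2) ℝ[X] :=
  !![X + C (a * b⁻¹), C (a + b); X * C (a⁻¹ + b⁻¹), X + C (b * a⁻¹)]

/-- The trace of `T(z)` as a real polynomial in `z`. -/
noncomputable def aztecTrace {k : ℕ} (α β : Fin k → ℝ) : ℝ[X] :=
  (List.ofFn fun m => aztecPoly (α m) (β m)).prod.trace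

/-- The discriminant of `T(z)` as a real polynomial in `z`. -/
noncomputable def aztecDisc {k : ℕ} (α β : Fin k → ℝ) : ℝ[X] :=
  aztecTrace α β ^ 2 - C 4 * (X - C 1) ^ (2 * k)

lemma mapMatrix_aeval_aztecPoly (a b : ℝ) (z : ℂ) :
    (aeval z : ℝ[X] →ₐ[ℝ] ℂ).mapMatrix (aztecPoly a b) = aztecA a b z := by
  ext i j
  fin_cases i <;> fin_cases j <;> simp [aztecPoly, aztecA]

lemma map_coeff_one_aztecPoly (a b : ℝ) :
    (aztecPoly a b).map (coeff · 1) = !![1, 0; a⁻¹ + b⁻¹, 1] := by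
  ext i j
  fin_cases i <;> fin_cases j <;> simp [aztecPoly]

lemma mapMatrix_eval_zero_aztecPoly (a b : ℝ) :
    (evalRingHom 0).mapMatrix (aztecPoly a b) = !![a * b⁻¹, a + b; 0, b * a⁻¹] := by
  ext i j
  fin_cases i <;> fin_cases j <;> simp [aztecPoly]

lemma natDegree_aztecPoly_apply_le (a b : ℝ) (i j : Fin 2) : (aztecPoly a b i j).natDegree ≤ 1 := by
  fin_cases i <;> fin_cases j
  · exact (natDegree_X_add_C _).le
  · exact (natDegree_C _).trans_le zero_le_one
  · exact (natDegree_mul_C_le _ _).trans natDegree_X_le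
  · exact (natDegree_X_add_C _).le

lemma coeff_aztecPoly_apply_nonneg {a b : ℝ} (ha : 0 < a) (hb : 0 < b) (i j : Fin 2) (m : ℕ) :
    0 ≤ (aztecPoly a b i j).coeff m := by
  have hX : 0 ≤ (X : ℝ[X]).coeff m := by rw [coeff_X]; positivity
  have hC (c : ℝ) (hc : 0 ≤ c) : 0 ≤ (C c).coeff m := by rw [coeff_C]; positivity
  fin_cases i <;> fin_cases j
  · exact (add_nonneg hX (hC _ (by positivity))).trans_eq (coeff_add _ _ _).symm
  · exact hC _ (by positivity)
  · exact (mul_nonneg hX (by positivity)).trans_eq (coeff_mul_C _ _ (a⁻¹ + b⁻¹)).symm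
  · exact (add_nonneg hX (hC _ (by positivity))).trans_eq (coeff_add _ _ _).symm

section Trace

variable {k : ℕ} (α β : Fin k → ℝ)

lemma aeval_aztecTrace (z : ℂ) : aeval z (aztecTrace α β) = (aztecT α β z).trace := by
  have hmap : (aeval z : ℝ[X] →ₐ[ℝ] ℂ).mapMatrix
      (List.ofFn fun m => aztecPoly (α m) (β m)).prod = aztecT α β z := by
    rw [map_list_prod, List.map_ofFn, aztecT]
    simp only [Function.comp_def, mapMatrix_aeval_aztecPoly]
  rw [← hmap, aztecTrace, AlgHom.mapMatrix_apply, AddMonoidHom.map_trace]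

lemma natDegree_aztecTrace_le : (aztecTrace α β).natDegree ≤ k := by
  have h := natDegree_list_prod_apply_le (L := List.ofFn fun m => aztecPoly (α m) (β m)) (d := 1)
    (List.forall_mem_ofFn_iff.2 fun m => natDegree_aztecPoly_apply_le _ _)
  rw [List.length_ofFn, mul_one] at h
  rw [aztecTrace, Matrix.trace]
  exact natDegree_sum_le_of_forall_le _ _ fun i _ => h i i

lemma coeff_aztecTrace_self : (aztecTrace α β).coeff k = 2 := by
  have hcoeff (i : Fin 2) := coeff_list_prod_apply (d := 1)
    (L := List.ofFn fun m => aztecPoly (α m) (β m))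
    (List.forall_mem_ofFn_iff.2 fun m => natDegree_aztecPoly_apply_le _ _) i i
  simp only [List.length_ofFn, mul_one, List.map_ofFn, Function.comp_def,
    map_coeff_one_aztecPoly] at hcoeff
  have hlower (a b : ℝ) : (!![1, 0; a⁻¹ + b⁻¹, 1]).BlockTriangular OrderDual.toDual := by
    intro i j hij
    rw [OrderDual.toDual_lt_toDual] at hij
    fin_cases i <;> fin_cases j <;> simp_all
  have hdiag (i : Fin 2) := list_prod_apply_self_of_blockTriangular OrderDual.toDual.injective
    (List.forall_mem_ofFn_iff.2 fun m => hlower (α m) (β m)) i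
  rw [aztecTrace, Matrix.trace_fin_two, coeff_add, hcoeff, hcoeff, hdiag, hdiag]
  simp only [List.map_ofFn, Function.comp_def, List.prod_ofFn]
  norm_num

lemma natDegree_aztecTrace : (aztecTrace α β).natDegree = k :=
  natDegree_eq_of_le_of_coeff_ne_zero (natDegree_aztecTrace_le α β) (by
    simp [coeff_aztecTrace_self])

lemma eval_zero_aztecTrace :
    (aztecTrace α β).eval 0 = ∏ m, α m * (β m)⁻¹ + ∏ m, β m * (α m)⁻¹ := by
  have hupper (a b : ℝ) : (!![a * b⁻¹, a + b; 0, b * a⁻¹]).BlockTriangular id := by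
    intro i j hij
    fin_cases i <;> fin_cases j <;> simp_all
  have hdiag (i : Fin 2) := list_prod_apply_self_of_blockTriangular Function.injective_id
    (List.forall_mem_ofFn_iff.2 fun m => hupper (α m) (β m)) i
  rw [aztecTrace, ← coe_evalRingHom, AddMonoidHom.map_trace, ← RingHom.mapMatrix_apply,
    map_list_prod, List.map_ofFn]
  simp only [Function.comp_def, mapMatrix_eval_zero_aztecPoly, Matrix.trace_fin_two, hdiag,
    List.map_ofFn, List.prod_ofFn]
  simp

variable {α β}

lemma coeff_aztecTrace_nonneg (hα : ∀ m, 0 < α m) (hβ : ∀ m, 0 < β m) (n : ℕ) :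
    0 ≤ (aztecTrace α β).coeff n := by
  have h := coeff_list_prod_apply_nonneg (L := List.ofFn fun m => aztecPoly (α m) (β m))
    (List.forall_mem_ofFn_iff.2 fun m => coeff_aztecPoly_apply_nonneg (hα m) (hβ m))
  rw [aztecTrace, Matrix.trace, finsetSum_coeff]
  exact Finset.sum_nonneg fun i _ => h i i n

lemma eval_one_aztecTrace_pos (hα : ∀ m, 0 < α m) (hβ : ∀ m, 0 < β m) :
    0 < (aztecTrace α β).eval 1 := by
  rw [eval_eq_sum_range]
  refine Finset.sum_pos' (fun n _ => by simpa using coeff_aztecTrace_nonneg hα hβ n) ⟨k, ?_, ?_⟩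
  · simp [natDegree_aztecTrace]
  · simp [coeff_aztecTrace_self]

end Trace

section Disc

variable {k : ℕ} {α β : Fin k → ℝ}

lemma aeval_aztecDisc (α β : Fin k → ℝ) (z : ℂ) :
    aeval z (aztecDisc α β) = (aztecT α β z).trace ^ 2 - 4 * (z - 1) ^ (2 * k) := by
  simp [aztecDisc, aeval_aztecTrace]

lemma aztecDisc_eq_mul (α β : Fin k → ℝ) :
    aztecDisc α β =
      (aztecTrace α β - C 2 * (X - C 1) ^ k) * (aztecTrace α β + C 2 * (X - C 1) ^ k) := by
  rw [aztecDisc, pow_mul', show (4 : ℝ) = 2 * 2 by norm_num, C_mul]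
  ring

lemma natDegree_aztecTrace_sub_le (α β : Fin k → ℝ) :
    (aztecTrace α β - C 2 * (X - C 1) ^ k).natDegree ≤ k - 1 := by
  refine natDegree_le_pred ?_ ?_
  · exact (natDegree_sub_le_of_le (natDegree_aztecTrace_le α β)
      (natDegree_C_mul_pow_X_sub_C_le 2 1 k)).trans_eq (max_self k)
  · rw [coeff_sub, coeff_C_mul, coeff_pow_X_sub_C_self, coeff_aztecTrace_self, mul_one, sub_self]

lemma natDegree_aztecTrace_add_le (α β : Fin k → ℝ) :
    (aztecTrace α β + C 2 * (X - C 1) ^ k).natDegree ≤ k :=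
  natDegree_add_le_of_degree_le (natDegree_aztecTrace_le α β) (natDegree_C_mul_pow_X_sub_C_le 2 1 k)

lemma natDegree_aztecDisc_le (α β : Fin k → ℝ) :
    (aztecDisc α β).natDegree ≤ 2 * k - 1 := by
  rw [aztecDisc_eq_mul]
  exact (natDegree_mul_le_of_le (natDegree_aztecTrace_sub_le α β)
    (natDegree_aztecTrace_add_le α β)).trans (by omega)

lemma coeff_aztecDisc (hk : 1 ≤ k) (α β : Fin k → ℝ) :
    (aztecDisc α β).coeff (2 * k - 1) = 4 * ((aztecTrace α β).coeff (k - 1) + 2 * k) := by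
  rw [aztecDisc_eq_mul, show 2 * k - 1 = (k - 1) + k by omega,
    coeff_mul_add_eq_of_natDegree_le (natDegree_aztecTrace_sub_le α β)
      (natDegree_aztecTrace_add_le α β),
    coeff_sub, coeff_add, coeff_C_mul, coeff_C_mul, coeff_pow_X_sub_C_pred 1 hk,
    coeff_pow_X_sub_C_self, coeff_aztecTrace_self]
  ring

lemma coeff_aztecDisc_pos (hk : 1 ≤ k) (hα : ∀ m, 0 < α m) (hβ : ∀ m, 0 < β m) :
    0 < (aztecDisc α β).coeff (2 * k - 1) := by
  have hk₀ : (0 : ℝ) < k := Nat.cast_pos.2 hk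
  have hF := coeff_aztecTrace_nonneg hα hβ (k - 1)
  rw [coeff_aztecDisc hk]
  exact mul_pos four_pos (add_pos_of_nonneg_of_pos hF (mul_pos two_pos hk₀))

lemma natDegree_aztecDisc (hk : 1 ≤ k) (hα : ∀ m, 0 < α m) (hβ : ∀ m, 0 < β m) :
    (aztecDisc α β).natDegree = 2 * k - 1 :=
  natDegree_eq_of_le_of_coeff_ne_zero (natDegree_aztecDisc_le α β)
    (coeff_aztecDisc_pos hk hα hβ).ne'

lemma leadingCoeff_aztecDisc_pos (hk : 1 ≤ k) (hα : ∀ m, 0 < α m) (hβ : ∀ m, 0 < β m) :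
    0 < (aztecDisc α β).leadingCoeff := by
  rw [leadingCoeff, natDegree_aztecDisc hk hα hβ]
  exact coeff_aztecDisc_pos hk hα hβ

lemma eval_zero_aztecDisc (hβ : ∀ m, 0 < β m) (hprod : ∏ m, α m = ∏ m, β m) :
    (aztecDisc α β).eval 0 = 0 := by
  have hβ₀ : ∏ m, β m ≠ 0 := Finset.prod_ne_zero_iff.2 fun m _ => (hβ m).ne'
  have htrace : (aztecTrace α β).eval 0 = 2 := by
    rw [eval_zero_aztecTrace]
    simp only [Finset.prod_mul_distrib, Finset.prod_inv_distrib, hprod, mul_inv_cancel₀ hβ₀]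
    norm_num
  simp only [aztecDisc, eval_sub, eval_mul, eval_pow, eval_C, eval_X, htrace, pow_mul]
  norm_num

end Disc

section Form

open ComplexConjugate

/-- The indefinite Hermitian form `Re (w v₀ v̄₁)` on `ℂ²`. For `0 < Re w` it is expanded by the
matrices `aztecA a b (w ^ 2)`; `w` is thus a square root of the variable `z`. -/
noncomputable def aztecForm (w : ℂ) (v : Fin 2 → ℂ) : ℝ := (w * v 0 * conj (v 1)).re

lemma aztecForm_smul (w c : ℂ) (v : Fin 2 → ℂ) :
    aztecForm w (c • v) = Complex.normSq c * aztecForm w v := by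
  simp only [aztecForm, Pi.smul_apply, smul_eq_mul, map_mul]
  rw [← Complex.re_ofReal_mul, ← Complex.mul_conj]
  ring_nf

lemma aztecForm_aztecA_mulVec {a b : ℝ} (ha : 0 < a) (hb : 0 < b) (w : ℂ) (v : Fin 2 → ℂ) :
    aztecForm w (aztecA a b (w ^ 2) *ᵥ v) = Complex.normSq (w ^ 2 - 1) * aztecForm w v +
      w.re * (a + b) * ((a * b)⁻¹ * Complex.normSq (w ^ 2 * v 0 + b * v 1) +
        (b ^ 2)⁻¹ * (Complex.normSq w * Complex.normSq (v 0 + b * v 1))) := by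
  obtain ⟨x, y⟩ := w
  rcases hp : v 0 with ⟨p, q⟩
  rcases hr : v 1 with ⟨r, s⟩
  simp only [aztecForm, aztecA, Matrix.mulVec, dotProduct, Fin.sum_univ_two, hp, hr]
  simp only [pow_two, ← Complex.ofReal_inv, of_apply, cons_val', cons_val_zero, cons_val_fin_one,
    cons_val_one, map_add, map_mul, Complex.conj_ofReal, Complex.mul_re, Complex.add_re,
    Complex.ofReal_re, Complex.ofReal_im, Complex.add_im, Complex.mul_im, Complex.conj_re,
    Complex.conj_im, Complex.normSq_apply, Complex.sub_re, Complex.one_re, Complex.sub_im,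
    Complex.one_im]
  field_simp
  ring

lemma aztecForm_lt {a b : ℝ} (ha : 0 < a) (hb : 0 < b) {w : ℂ} (hw : 0 < w.re) (hw₁ : w ^ 2 ≠ 1)
    {v : Fin 2 → ℂ} (hv : v ≠ 0) :
    Complex.normSq (w ^ 2 - 1) * aztecForm w v < aztecForm w (aztecA a b (w ^ 2) *ᵥ v) := by
  rw [aztecForm_aztecA_mulVec ha hb, lt_add_iff_pos_right]
  have hw₀ : 0 < Complex.normSq w := Complex.normSq_pos.2 (by rintro rfl; simp at hw)
  have hb₀ : (b : ℂ) ≠ 0 := Complex.ofReal_ne_zero.2 hb.ne'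
  have h₁ := Complex.normSq_nonneg (w ^ 2 * v 0 + b * v 1)
  rcases h₁.eq_or_lt with h₁ | h₁
  · have h₂ : 0 < Complex.normSq (v 0 + b * v 1) := Complex.normSq_pos.2 fun h₂ => hv (by
      have hv₀ : v 0 = 0 := (mul_eq_zero.1 (show (w ^ 2 - 1) * v 0 = 0 by
        linear_combination Complex.normSq_eq_zero.1 h₁.symm - h₂)).resolve_left (sub_ne_zero.2 hw₁)
      have hv₁ : v 1 = 0 := by simpa [hv₀, hb₀] using h₂
      exact funext (Fin.forall_fin_two.2 ⟨hv₀, hv₁⟩))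
    positivity
  · have h₂ := Complex.normSq_nonneg (v 0 + b * v 1)
    positivity

variable {k : ℕ} {α β : Fin k → ℝ}

lemma aztecForm_aztecT_lt (hk : 1 ≤ k) (hα : ∀ m, 0 < α m) (hβ : ∀ m, 0 < β m) {w : ℂ}
    (hw : 0 < w.re) (hw₁ : w ^ 2 ≠ 1) {v : Fin 2 → ℂ} (hv : v ≠ 0) :
    Complex.normSq (w ^ 2 - 1) ^ k * aztecForm w v < aztecForm w (aztecT α β (w ^ 2) *ᵥ v) := by
  have h := pow_length_mul_lt_apply_list_prod_mulVec (Q := aztecForm w) (by simp [aztecForm])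
    (Complex.normSq_pos.2 (sub_ne_zero.2 hw₁))
    (List.ofFn_eq_nil_iff.not.2 (Nat.one_le_iff_ne_zero.1 hk))
    (List.forall_mem_ofFn_iff.2 fun m v hv => aztecForm_lt (hα m) (hβ m) hw hw₁ hv) hv
  rwa [List.length_ofFn] at h

lemma det_aztecT (hα : ∀ m, 0 < α m) (hβ : ∀ m, 0 < β m) (z : ℂ) :
    (aztecT α β z).det = (z - 1) ^ (2 * k) := by
  have hdet (m : Fin k) : (aztecA (α m) (β m) z).det = (z - 1) ^ 2 := by
    have ha : (α m : ℂ) ≠ 0 := by exact_mod_cast (hα m).ne'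
    have hb : (β m : ℂ) ≠ 0 := by exact_mod_cast (hβ m).ne'
    rw [aztecA, Matrix.det_fin_two_of]
    field_simp
    ring
  rw [aztecT, ← Matrix.coe_detMonoidHom, map_list_prod, List.map_ofFn, List.prod_ofFn]
  simp [hdet, pow_mul]

lemma eval_charpoly_aztecT (hα : ∀ m, 0 < α m) (hβ : ∀ m, 0 < β m) (z μ : ℂ) :
    (aztecT α β z).charpoly.eval μ =
      μ ^ 2 - (aztecT α β z).trace * μ + (z - 1) ^ (2 * k) := by
  simp [Matrix.charpoly_fin_two, det_aztecT hα hβ]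

lemma notMem_slitPlane_of_isRoot_charpoly (hk : 1 ≤ k) (hα : ∀ m, 0 < α m) (hβ : ∀ m, 0 < β m)
    {z μ : ℂ} (hz : z ≠ 1) (hμ : (aztecT α β z).charpoly.IsRoot μ)
    (hnorm : Complex.normSq μ = Complex.normSq (z - 1) ^ k) : z ∉ Complex.slitPlane := by
  intro hslit
  obtain ⟨w, hw, rfl⟩ := exists_sq_eq_of_mem_slitPlane hslit
  obtain ⟨v, hv, hTv⟩ := exists_mulVec_eq_smul_of_isRoot_charpoly hμ
  have hlt := aztecForm_aztecT_lt hk hα hβ hw hz hv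
  rw [hTv, aztecForm_smul, hnorm] at hlt
  exact lt_irrefl _ hlt

lemma trace_aztecT_one_ne_zero (hα : ∀ m, 0 < α m) (hβ : ∀ m, 0 < β m) :
    (aztecT α β 1).trace ≠ 0 := by
  have h := aeval_algebraMap_apply ℂ (1 : ℝ) (aztecTrace α β)
  rw [map_one, aeval_aztecTrace, coe_aeval_eq_eval] at h
  rw [h]
  exact (_root_.map_ne_zero _).2 (eval_one_aztecTrace_pos hα hβ).ne'

lemma notMem_slitPlane_of_trace_eq_zero (hk : 1 ≤ k) (hα : ∀ m, 0 < α m) (hβ : ∀ m, 0 < β m)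
    {z : ℂ} (h : (aztecT α β z).trace = 0) : z ∉ Complex.slitPlane := by
  have hz : z ≠ 1 := by
    rintro rfl
    exact trace_aztecT_one_ne_zero hα hβ h
  refine notMem_slitPlane_of_isRoot_charpoly hk hα hβ (μ := Complex.I * (z - 1) ^ k) hz ?_ (by simp)
  rw [IsRoot.def, eval_charpoly_aztecT hα hβ, h, mul_pow, Complex.I_sq, ← pow_mul']
  ring

lemma notMem_slitPlane_of_trace_sq_eq (hk : 1 ≤ k) (hα : ∀ m, 0 < α m) (hβ : ∀ m, 0 < β m) {z : ℂ}
    (h : (aztecT α β z).trace ^ 2 = 4 * (z - 1) ^ (2 * k)) : z ∉ Complex.slitPlane := by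
  have hz : z ≠ 1 := by
    rintro rfl
    refine trace_aztecT_one_ne_zero hα hβ (pow_eq_zero_iff two_ne_zero |>.1 ?_)
    rw [h, sub_self, zero_pow (by omega), mul_zero]
  -- The characteristic polynomial has a double root, which is half the trace.
  have hnorm : Complex.normSq ((aztecT α β z).trace / 2) = Complex.normSq (z - 1) ^ k := by
    refine (pow_left_inj₀ (Complex.normSq_nonneg _) (pow_nonneg (Complex.normSq_nonneg _) _)
      two_ne_zero).1 ?_
    rw [← map_pow, ← map_pow, ← map_pow, div_pow, h, ← pow_mul']
    ring_nf
  refine notMem_slitPlane_of_isRoot_charpoly hk hα hβ hz ?_ hnorm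
  rw [IsRoot.def, eval_charpoly_aztecT hα hβ]
  linear_combination - h / 4

end Form

section Roots

variable {k : ℕ} {α β : Fin k → ℝ}

lemma nonpos_of_aeval_aztecDisc_eq_zero (hk : 1 ≤ k) (hα : ∀ m, 0 < α m) (hβ : ∀ m, 0 < β m)
    {z : ℂ} (hz : aeval z (aztecDisc α β) = 0) : z.im = 0 ∧ z.re ≤ 0 := by
  rw [aeval_aztecDisc, sub_eq_zero] at hz
  exact notMem_slitPlane_iff.1 (notMem_slitPlane_of_trace_sq_eq hk hα hβ hz)

lemma splits_aztecTrace (hk : 1 ≤ k) (hα : ∀ m, 0 < α m) (hβ : ∀ m, 0 < β m) :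
    (aztecTrace α β).Splits :=
  splits_of_forall_aeval_complex fun z hz => by
    rw [aeval_aztecTrace] at hz
    exact (notMem_slitPlane_iff.1 (notMem_slitPlane_of_trace_eq_zero hk hα hβ hz)).1

lemma splits_aztecDisc (hk : 1 ≤ k) (hα : ∀ m, 0 < α m) (hβ : ∀ m, 0 < β m) :
    (aztecDisc α β).Splits :=
  splits_of_forall_aeval_complex fun _ hz => (nonpos_of_aeval_aztecDisc_eq_zero hk hα hβ hz).1

lemma eval_neg_of_aztecDisc_eq_sq_mul (hk : 1 ≤ k) (hα : ∀ m, 0 < α m) (hβ : ∀ m, 0 < β m) {x : ℝ}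
    {q : ℝ[X]} (hq : aztecDisc α β = (X - C x) ^ 2 * q) : q.eval x < 0 := by
  have hdeg := natDegree_aztecTrace α β
  refine eval_neg_of_sq_sub_pow_eq_sq_mul (splits_aztecTrace hk hα hβ) (by omega) four_ne_zero
    (eval_one_aztecTrace_pos hα hβ).ne' ?_
  rw [hdeg, ← hq, aztecDisc]

lemma isGreatest_roots_aztecDisc (hk : 1 ≤ k) (hα : ∀ m, 0 < α m) (hβ : ∀ m, 0 < β m)
    (hprod : ∏ m, α m = ∏ m, β m) : IsGreatest {x | x ∈ (aztecDisc α β).roots} 0 := by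
  have hne : aztecDisc α β ≠ 0 := leadingCoeff_ne_zero.1 (leadingCoeff_aztecDisc_pos hk hα hβ).ne'
  refine ⟨(mem_roots hne).2 (eval_zero_aztecDisc hβ hprod), fun x hx => ?_⟩
  have h := aeval_algebraMap_apply ℂ x (aztecDisc α β)
  rw [coe_aeval_eq_eval, (mem_roots hne).1 hx, map_zero] at h
  simpa using (nonpos_of_aeval_aztecDisc_eq_zero hk hα hβ h).2

end Roots

/-- the discriminant polynomial `p` has degree `2k−1`, `p(0) = 0`, all its roots
are real and nonpositive, and its roots listed with multiplicity in nonincreasing order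
`s₀ ≥ s₁ ≥ ⋯ ≥ s_{2k−2}` satisfy `s₀ = 0` and `s_{2j} > s_{2j+1}` strictly; in particular
every root has multiplicity at most `2`. -/
theorem stmt1 (k : ℕ) (hk : 1 ≤ k) (α β : Fin k → ℝ)
    (hα : ∀ m, 0 < α m) (hβ : ∀ m, 0 < β m)
    (hprod : ∏ m, α m = ∏ m, β m)
    (p : Polynomial ℝ)
    (hp : ∀ z : ℂ, Polynomial.aeval z p
        = (Matrix.trace (aztecT α β z)) ^ 2 - 4 * (z - 1) ^ (2 * k)) :
    p.natDegree = 2 * k - 1 ∧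
    p.eval 0 = 0 ∧
    (∀ z : ℂ, Polynomial.aeval z p = 0 → z.im = 0 ∧ z.re ≤ 0) ∧
    (∀ s : Fin (2 * k - 1) → ℝ, Antitone s →
        Multiset.map s Finset.univ.val = p.roots →
        s ⟨0, by omega⟩ = 0 ∧
        ∀ i j : Fin (2 * k - 1), (i : ℕ) % 2 = 0 → (j : ℕ) = (i : ℕ) + 1 → s j < s i) ∧
    (∀ x : ℝ, p.rootMultiplicity x ≤ 2) := by
  obtain rfl : p = aztecDisc α β := by
    refine map_injective (algebraMap ℝ ℂ) (algebraMap ℝ ℂ).injective (Polynomial.funext fun z => ?_)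
    rw [eval_map_algebraMap, eval_map_algebraMap, hp, aeval_aztecDisc]
  have hdouble (x : ℝ) (q : ℝ[X]) (hq : aztecDisc α β = (X - C x) ^ 2 * q) : q.eval x < 0 :=
    eval_neg_of_aztecDisc_eq_sq_mul hk hα hβ hq
  refine ⟨natDegree_aztecDisc hk hα hβ, eval_zero_aztecDisc hβ hprod,
    fun z hz => nonpos_of_aeval_aztecDisc_eq_zero hk hα hβ hz, fun s hs hroots => ⟨?_, ?_⟩,
    rootMultiplicity_le_two hdouble⟩
  · have hrange : Set.range s = {x | x ∈ (aztecDisc α β).roots} := by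
      ext x
      simp [← hroots]
    exact apply_zero_eq_of_antitone _ hs (hrange ▸ isGreatest_roots_aztecDisc hk hα hβ hprod)
  · intro i j hi hj
    exact lt_of_antitone_of_roots_eq (splits_aztecDisc hk hα hβ)
      (leadingCoeff_aztecDisc_pos hk hα hβ) hdouble hs hroots (Nat.even_iff.2 hi) hj
end

section
/- Let n ≥ 1 and let u, v ∈ ℝ[X] with deg u = n and deg v = n−1, such that all complex roots of u and of v are real and strictly less than 1. List the roots with multiplicity in nonincreasing order: s₁ ≥ s₂ ≥ ⋯ ≥ s_n for u and t₁ ≥ t₂ ≥ ⋯ ≥ t_{n−1} for v. Assume: (a) for every ℓ ∈ {1,…,n} and every real z < 1, the (n−ℓ)-th derivatives satisfy v^{(n−ℓ)}(z) < u^{(n−ℓ)}(z) if ℓ is even and u^{(n−ℓ)}(z) < v^{(n−ℓ)}(z) if ℓ is odd; (b) u^{(ℓ)}(1) > 0 and v^{(ℓ)}(1) > 0 for every ℓ ∈ {0,…,n−1}. Then: if n is odd, s_i > t_i for every odd i with 1 ≤ i ≤ n−1 and t_i > s_i for every even i with 1 ≤ i ≤ n−1 (giving the interlacing s₁ > t₁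 ≥ t₂ > s₂ ≥ s₃ > t₃ ≥ t₄ > ⋯ > s_{n−1} ≥ s_n); if n is even, t_i > s_i for every odd i with 1 ≤ i ≤ n−1 and s_i > t_i for every even i with 1 ≤ i ≤ n−1 (giving t₁ > s₁ ≥ s₂ > t₂ ≥ t₃ > s₃ ≥ s₄ > ⋯ > s_{n−1} ≥ s_n). -/
open Polynomial

/-!
By Rolle's theorem the roots of `p'` interlace those of `p`, with multiplicity. Compare the `i`-th
largest roots of `p` and `q`, counting from `0`, when `p < q`, `q' < p'`, `p'' < q''`, ... on an
interval containing all the roots. The pair `(q', p')` satisfies the same kind of inequalities, so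
by induction on `i` the `(i - 1)`-th roots of the derivatives are already ordered; interlacing then
puts the `i`-th root `x` of `q` (for even `i`) or of `p` (for odd `i`) below the `(i - 1)`-th root
of the other polynomial. If `x` were also at or above the `i`-th root of the other polynomial, the
value of that polynomial at `x` would have sign `(-1)^i` or vanish, contradicting `p x < q x`.
-/

theorem card_le_card_add_one_of_interleaved {α : Type*} [LinearOrder α] {A B : Multiset α}
    (hcount : ∀ x ∈ A, A.count x ≤ B.count x + 1)
    (hbetween : ∀ x ∈ A, ∀ y ∈ A, x < y → ∃ z ∈ B, x < z ∧ z < y) :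
    A.card ≤ B.card + 1 := by
  have hdistinct : A.toFinset.card ≤ (B.toFinset \ A.toFinset).card + 1 :=
    Finset.card_le_sdiff_of_interleaved fun x hx y hy hxy _ => by
      simpa only [Multiset.mem_toFinset] using
        hbetween x (Multiset.mem_toFinset.1 hx) y (Multiset.mem_toFinset.1 hy) hxy
  have hnew : (B.toFinset \ A.toFinset).card ≤ ∑ x ∈ B.toFinset \ A.toFinset, B.count x := by
    rw [Finset.card_eq_sum_ones]
    exact Finset.sum_le_sum fun x hx =>
      Multiset.one_le_count_iff_mem.2 (Multiset.mem_toFinset.1 (Finset.mem_sdiff.1 hx).1)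
  calc A.card = ∑ x ∈ A.toFinset, A.count x := (Multiset.toFinset_sum_count_eq A).symm
    _ ≤ ∑ x ∈ A.toFinset, (B.count x + 1) :=
      Finset.sum_le_sum fun x hx => hcount x (Multiset.mem_toFinset.1 hx)
    _ = ∑ x ∈ A.toFinset, B.count x + A.toFinset.card := by
      rw [Finset.sum_add_distrib, Finset.card_eq_sum_ones]
    _ ≤ ∑ x ∈ A.toFinset, B.count x + (∑ x ∈ B.toFinset \ A.toFinset, B.count x + 1) := by
      gcongr
      exact hdistinct.trans (by gcongr)
    _ = ∑ x ∈ A.toFinset ∪ B.toFinset, B.count x + 1 := by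
      rw [← add_assoc, ← Finset.sum_union Finset.disjoint_sdiff,
        Finset.union_sdiff_self_eq_union]
    _ = B.card + 1 := by
      rw [Multiset.sum_count_eq_card fun x hx =>
        Finset.mem_union_right _ (Multiset.mem_toFinset.2 hx)]

theorem card_filter_roots_le_derivative (p : ℝ[X]) {S : Set ℝ} [DecidablePred (· ∈ S)]
    (hS : S.OrdConnected) :
    (p.roots.filter (· ∈ S)).card ≤ (p.derivative.roots.filter (· ∈ S)).card + 1 := by
  rcases eq_or_ne (derivative p) 0 with hp' | hp'
  · rw [eq_C_of_derivative_eq_zero hp']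
    simp
  refine card_le_card_add_one_of_interleaved (fun x hx => ?_) fun x hx y hy hxy => ?_
  · have hxS : x ∈ S := (Multiset.mem_filter.1 hx).2
    rw [Multiset.count_filter_of_pos (p := (· ∈ S)) hxS,
      Multiset.count_filter_of_pos (p := (· ∈ S)) hxS, count_roots, count_roots]
    exact Nat.sub_le_iff_le_add.1 (rootMultiplicity_sub_one_le_derivative_rootMultiplicity p x)
  · rw [Multiset.mem_filter] at hx hy
    obtain ⟨z, hz, hz'⟩ := exists_deriv_eq_zero hxy p.continuousOn
      ((isRoot_of_mem_roots hx.1).eq_zero.trans (isRoot_of_mem_roots hy.1).eq_zero.symm)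
    refine ⟨z, Multiset.mem_filter.2 ⟨?_, hS.out hx.2 hy.2 (Set.Ioo_subset_Icc_self hz)⟩, hz⟩
    rwa [mem_roots hp', IsRoot, ← p.deriv]

theorem exists_antitone_map_eq {α : Type*} [LinearOrder α] (M : Multiset α) {n : ℕ}
    (hn : M.card = n) : ∃ s : Fin n → α, Antitone s ∧ Multiset.map s Finset.univ.val = M := by
  obtain rfl : (M.sort (· ≥ ·)).length = n := (M.length_sort (· ≥ ·)).trans hn
  refine ⟨(M.sort (· ≥ ·)).get, (M.pairwise_sort (· ≥ ·)).sortedGE.antitone_get, ?_⟩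
  rw [Fin.univ_val_map, List.ofFn_get, Multiset.sort_eq]

/-- `IsRootSeq p s` says that the real polynomial `p` has degree `n`, that all its roots are real,
and that `s 0 ≥ s 1 ≥ ⋯ ≥ s (n - 1)` lists them with multiplicity. For `n = 0` this allows every
constant `p`, including `0`. -/
structure IsRootSeq (p : ℝ[X]) {n : ℕ} (s : Fin n → ℝ) : Prop where
  natDegree_eq : p.natDegree = n
  antitone : Antitone s
  map_eq : Multiset.map s Finset.univ.val = p.roots

namespace IsRootSeq

section Basic

variable {p : ℝ[X]} {n : ℕ} {s : Fin n → ℝ}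

theorem card_roots (h : IsRootSeq p s) : p.roots.card = n := by
  simp [← h.map_eq]

theorem card_filter_roots (h : IsRootSeq p s) (P : ℝ → Prop) [DecidablePred P] :
    (p.roots.filter P).card = (Finset.univ.filter fun i => P (s i)).card := by
  rw [← h.map_eq, Multiset.filter_map, Multiset.card_map]
  rfl

theorem eval_eq_prod (h : IsRootSeq p s) (x : ℝ) :
    p.eval x = p.leadingCoeff * ∏ i, (x - s i) := by
  have hsplits : p.Splits := splits_iff_card_roots.2 (h.card_roots.trans h.natDegree_eq.symm)
  rw [hsplits.eval_eq_prod_roots, ← h.map_eq, Multiset.map_map]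
  rfl

theorem eval_apply (h : IsRootSeq p s) (i : Fin n) : p.eval (s i) = 0 := by
  rw [h.eval_eq_prod, Finset.prod_eq_zero (Finset.mem_univ i) (sub_self _), mul_zero]

theorem apply_mem_of_re_mem (h : IsRootSeq p s) {S : Set ℝ}
    (hS : ∀ z : ℂ, aeval z p = 0 → z.re ∈ S) (i : Fin n) : s i ∈ S := by
  refine hS (s i) ?_
  rw [← Complex.coe_algebraMap, aeval_algebraMap_apply, coe_aeval_eq_eval, h.eval_apply, map_zero]

theorem leadingCoeff_pos (h : IsRootSeq p s) {x : ℝ} (hx : ∀ i, s i ≤ x) (hpos : 0 < p.eval x) :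
    0 < p.leadingCoeff := by
  rw [h.eval_eq_prod] at hpos
  exact pos_of_mul_pos_left hpos (Finset.prod_nonneg fun i _ => sub_nonneg.2 (hx i))

theorem neg_one_pow_mul_eval_nonneg (h : IsRootSeq p s) (hp : 0 ≤ p.leadingCoeff) {i : Fin n}
    {x : ℝ} (hle : ∀ j < i, x ≤ s j) (hge : s i ≤ x) : 0 ≤ (-1) ^ (i : ℕ) * p.eval x := by
  have hhead : ∏ j ∈ Finset.Iio i, (s j - x) = (-1) ^ (i : ℕ) * ∏ j ∈ Finset.Iio i, (x - s j) := by
    rw [← Fin.card_Iio i, ← Finset.prod_neg]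
    simp only [neg_sub]
  have hhead_nonneg : 0 ≤ ∏ j ∈ Finset.Iio i, (s j - x) :=
    Finset.prod_nonneg fun j hj => sub_nonneg.2 (hle j (Finset.mem_Iio.1 hj))
  have htail_nonneg : 0 ≤ ∏ j ∈ (Finset.Iio i)ᶜ, (x - s j) :=
    Finset.prod_nonneg fun j hj => sub_nonneg.2 <|
      (h.antitone (by simpa using hj)).trans hge
  calc 0 ≤ p.leadingCoeff *
        ((∏ j ∈ Finset.Iio i, (s j - x)) * ∏ j ∈ (Finset.Iio i)ᶜ, (x - s j)) :=
        mul_nonneg hp (mul_nonneg hhead_nonneg htail_nonneg)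
    _ = (-1) ^ (i : ℕ) * p.eval x := by
        rw [h.eval_eq_prod, ← Finset.prod_mul_prod_compl (Finset.Iio i), hhead]
        ring

end Basic

section Derivative

variable {p : ℝ[X]} {n : ℕ} {s : Fin (n + 1) → ℝ} {s' : Fin n → ℝ}

theorem exists_derivative (h : IsRootSeq p s) : ∃ s' : Fin n → ℝ, IsRootSeq (derivative p) s' := by
  have hdeg : (derivative p).natDegree = n := by rw [natDegree_derivative, h.natDegree_eq]; rfl
  have hcard : (derivative p).roots.card = n := by
    have hle := card_roots' (derivative p)
    have hge := card_roots_le_derivative p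
    rw [h.card_roots] at hge
    omega
  obtain ⟨s', hanti, hmap⟩ := exists_antitone_map_eq (derivative p).roots hcard
  exact ⟨s', hdeg, hanti, hmap⟩

theorem leadingCoeff_derivative_pos (h : IsRootSeq p s) (hp : 0 < p.leadingCoeff) :
    0 < (derivative p).leadingCoeff := by
  rw [leadingCoeff_derivative, h.natDegree_eq]
  positivity

theorem succ_le_derivative (h : IsRootSeq p s) (h' : IsRootSeq (derivative p) s') (i : Fin n) :
    s i.succ ≤ s' i := by
  classical
  have hrolle := card_filter_roots_le_derivative p (Set.ordConnected_Ici (a := s i.succ))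
  rw [h.card_filter_roots, h'.card_filter_roots] at hrolle
  have hcount := (Tuple.lt_card_ge_iff_apply_ge_of_antitone h.antitone).2 (le_refl (s i.succ))
  refine (Tuple.lt_card_ge_iff_apply_ge_of_antitone h'.antitone).1 ?_
  simp only [Set.mem_Ici, Fin.val_succ] at hrolle hcount
  omega

theorem derivative_le_castSucc (h : IsRootSeq p s) (h' : IsRootSeq (derivative p) s')
    (i : Fin n) : s' i ≤ s i.castSucc := by
  classical
  by_contra! hlt
  have hrolle := card_filter_roots_le_derivative p (Set.ordConnected_Iic (a := s i.castSucc))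
  rw [h.card_filter_roots, h'.card_filter_roots] at hrolle
  have hcount := mt (Tuple.lt_card_gt_iff_apply_gt_of_antitone h.antitone).1
    (lt_irrefl (s i.castSucc))
  have hcount' := (Tuple.lt_card_gt_iff_apply_gt_of_antitone h'.antitone).2 hlt
  have htotal := Finset.card_filter_add_card_filter_not (s := Finset.univ)
    (fun j => s j ≤ s i.castSucc)
  have htotal' := Finset.card_filter_add_card_filter_not (s := Finset.univ)
    (fun j => s' j ≤ s i.castSucc)
  simp only [not_le, Finset.card_univ, Fintype.card_fin, Set.mem_Iic, Fin.val_castSucc]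
    at hrolle hcount hcount' htotal htotal'
  omega

theorem derivative_mem (h : IsRootSeq p s) (h' : IsRootSeq (derivative p) s') {S : Set ℝ}
    (hS : S.OrdConnected) (hsS : ∀ j, s j ∈ S) (i : Fin n) : s' i ∈ S :=
  hS.out (hsS _) (hsS _) ⟨h.succ_le_derivative h' i, h.derivative_le_castSucc h' i⟩

end Derivative

section Comparison

variable {p q : ℝ[X]} {n m : ℕ} {s : Fin n → ℝ} {t : Fin m → ℝ} {S : Set ℝ} {i : ℕ}

theorem lt_of_eval_lt_of_even (hs : IsRootSeq p s) (ht : IsRootSeq q t)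
    (hp : 0 ≤ p.leadingCoeff) (hin : i < n) (him : i < m) (hi : Even i)
    (hlt : p.eval (t ⟨i, him⟩) < q.eval (t ⟨i, him⟩))
    (hprev : ∀ j < (⟨i, hin⟩ : Fin n), t ⟨i, him⟩ ≤ s j) : t ⟨i, him⟩ < s ⟨i, hin⟩ := by
  by_contra! hge
  have hsign := hs.neg_one_pow_mul_eval_nonneg hp hprev hge
  rw [hi.neg_one_pow, one_mul] at hsign
  linarith [ht.eval_apply ⟨i, him⟩]

theorem lt_of_eval_lt_of_odd (hs : IsRootSeq p s) (ht : IsRootSeq q t)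
    (hq : 0 ≤ q.leadingCoeff) (hin : i < n) (him : i < m) (hi : Odd i)
    (hlt : p.eval (s ⟨i, hin⟩) < q.eval (s ⟨i, hin⟩))
    (hprev : ∀ j < (⟨i, him⟩ : Fin m), s ⟨i, hin⟩ ≤ t j) : s ⟨i, hin⟩ < t ⟨i, him⟩ := by
  by_contra! hge
  have hsign := ht.neg_one_pow_mul_eval_nonneg hq hprev hge
  rw [hi.neg_one_pow, neg_one_mul] at hsign
  linarith [hs.eval_apply ⟨i, hin⟩]

theorem alternating_of_iterate_derivative_lt (hS : S.OrdConnected)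
    (hs : IsRootSeq p s) (ht : IsRootSeq q t) (hp : 0 < p.leadingCoeff) (hq : 0 < q.leadingCoeff)
    (hsS : ∀ j, s j ∈ S) (htS : ∀ j, t j ∈ S) (hin : i < n) (him : i < m)
    (heven : ∀ k ≤ i, Even k → ∀ z ∈ S, (derivative^[k] p).eval z < (derivative^[k] q).eval z)
    (hodd : ∀ k ≤ i, Odd k → ∀ z ∈ S, (derivative^[k] q).eval z < (derivative^[k] p).eval z) :
    (Even i → t ⟨i, him⟩ < s ⟨i, hin⟩) ∧ (Odd i → s ⟨i, hin⟩ < t ⟨i, him⟩) := by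
  induction i generalizing p q n m with
  | zero =>
    exact ⟨fun hi => hs.lt_of_eval_lt_of_even ht hp.le hin him hi
      (heven 0 le_rfl .zero _ (htS _)) fun j hj => absurd hj (Nat.not_lt_zero j), by simp⟩
  | succ i ih =>
    obtain ⟨n, rfl⟩ : ∃ n', n = n' + 1 := Nat.exists_eq_add_one_of_ne_zero (by omega)
    obtain ⟨m, rfl⟩ : ∃ m', m = m' + 1 := Nat.exists_eq_add_one_of_ne_zero (by omega)
    obtain ⟨s', hs'⟩ := hs.exists_derivative
    obtain ⟨t', ht'⟩ := ht.exists_derivative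
    have hin' : i < n := by omega
    have him' : i < m := by omega
    obtain ⟨ih_even, ih_odd⟩ := ih ht' hs' (ht.leadingCoeff_derivative_pos hq)
      (hs.leadingCoeff_derivative_pos hp) (ht.derivative_mem ht' hS htS)
      (hs.derivative_mem hs' hS hsS) him' hin'
      (fun k hk hk_even => hodd (k + 1) (by omega) hk_even.add_one)
      (fun k hk hk_odd => heven (k + 1) (by omega) hk_odd.add_one)
    have hlt : ∀ z ∈ S, p.eval z < q.eval z := heven 0 (Nat.zero_le _) .zero
    constructor <;> intro hi
    · refine hs.lt_of_eval_lt_of_even ht hp.le hin him hi (hlt _ (htS _)) fun j hj => ?_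
      calc t ⟨i + 1, him⟩ ≤ t' ⟨i, him'⟩ := ht.succ_le_derivative ht' ⟨i, him'⟩
        _ ≤ s' ⟨i, hin'⟩ := (ih_odd (by grind)).le
        _ ≤ s ⟨i, _⟩ := hs.derivative_le_castSucc hs' ⟨i, hin'⟩
        _ ≤ s j := hs.antitone (Nat.lt_succ_iff.1 hj)
    · refine hs.lt_of_eval_lt_of_odd ht hq.le hin him hi (hlt _ (hsS _)) fun j hj => ?_
      calc s ⟨i + 1, hin⟩ ≤ s' ⟨i, hin'⟩ := hs.succ_le_derivative hs' ⟨i, hin'⟩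
        _ ≤ t' ⟨i, him'⟩ := (ih_even (by grind)).le
        _ ≤ t ⟨i, _⟩ := ht.derivative_le_castSucc ht' ⟨i, him'⟩
        _ ≤ t j := ht.antitone (Nat.lt_succ_iff.1 hj)

end Comparison

end IsRootSeq

theorem stmt2_general {S : Set ℝ} (hS : S.OrdConnected) {n m : ℕ} {u v : ℝ[X]}
    {s : Fin n → ℝ} {t : Fin m → ℝ} (hs : IsRootSeq u s) (ht : IsRootSeq v t)
    (hu : 0 < u.leadingCoeff) (hv : 0 < v.leadingCoeff)
    (hsS : ∀ j, s j ∈ S) (htS : ∀ j, t j ∈ S) (i : ℕ) (h1 : 1 ≤ i) (hin : i ≤ n) (him : i ≤ m)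
    (hderiv : ∀ ℓ, n - i < ℓ → ℓ ≤ n → ∀ z ∈ S,
      if Even ℓ then (derivative^[n - ℓ] v).eval z < (derivative^[n - ℓ] u).eval z
      else (derivative^[n - ℓ] u).eval z < (derivative^[n - ℓ] v).eval z) :
    (Odd n →
      (Odd i → t ⟨i - 1, by omega⟩ < s ⟨i - 1, by omega⟩) ∧
      (Even i → s ⟨i - 1, by omega⟩ < t ⟨i - 1, by omega⟩)) ∧
    (Even n →
      (Odd i → s ⟨i - 1, by omega⟩ < t ⟨i - 1, by omega⟩) ∧
      (Even i → t ⟨i - 1, by omega⟩ < s ⟨i - 1, by omega⟩)) := by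
  obtain ⟨i, rfl⟩ : ∃ i', i = i' + 1 := Nat.exists_eq_add_one_of_ne_zero (by omega)
  have hsub : ∀ k ≤ i, n - (n - k) = k := fun k hk => Nat.sub_sub_self (by omega)
  have heven : ∀ k ≤ i, Even (n - k) → ∀ z ∈ S,
      (derivative^[k] v).eval z < (derivative^[k] u).eval z := fun k hk hnk z hz => by
    simpa only [if_pos hnk, hsub k hk] using hderiv (n - k) (by omega) (Nat.sub_le n k) z hz
  have hodd : ∀ k ≤ i, ¬Even (n - k) → ∀ z ∈ S,
      (derivative^[k] u).eval z < (derivative^[k] v).eval z := fun k hk hnk z hz => by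
    simpa only [if_neg hnk, hsub k hk] using hderiv (n - k) (by omega) (Nat.sub_le n k) z hz
  simp only [Nat.odd_add_one, Nat.even_add_one, Nat.not_odd_iff_even, Nat.not_even_iff_odd]
  refine ⟨fun hn => ?_, fun hn => ?_⟩
  · exact hs.alternating_of_iterate_derivative_lt hS ht hu hv hsS htS hin him
      (fun k hk hk_even => hodd k hk (by grind)) (fun k hk hk_odd => heven k hk (by grind))
  · exact ht.alternating_of_iterate_derivative_lt hS hs hv hu htS hsS him hin
      (fun k hk hk_even => heven k hk (by grind)) (fun k hk hk_odd => hodd k hk (by grind))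

/-- interlacing lemma for two real-rooted polynomials `u` of degree `n` and
`v` of degree `n−1`, all of whose roots are `< 1`, whose iterated derivatives are ordered
on `(−∞,1)` with alternating strict inequalities, and whose derivatives are positive at `1`.
Here `s` and `t` list the roots (with multiplicity) of `u` and `v` in nonincreasing order,
`0`-indexed, so the paper's `s_i` is `s ⟨i−1⟩`. -/
theorem stmt2 (n : ℕ) (hn : 1 ≤ n) (u v : Polynomial ℝ)
    (hu : u.natDegree = n) (hv : v.natDegree = n - 1)
    (huroots : ∀ z : ℂ, Polynomial.aeval z u = 0 → z.im = 0 ∧ z.re < 1)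
    (hvroots : ∀ z : ℂ, Polynomial.aeval z v = 0 → z.im = 0 ∧ z.re < 1)
    (s : Fin n → ℝ) (hs : Antitone s)
    (hsroots : Multiset.map s Finset.univ.val = u.roots)
    (t : Fin (n - 1) → ℝ) (ht : Antitone t)
    (htroots : Multiset.map t Finset.univ.val = v.roots)
    (hderiv : ∀ ℓ : ℕ, 1 ≤ ℓ → ℓ ≤ n → ∀ z : ℝ, z < 1 →
        if Even ℓ then
          (Polynomial.derivative^[n - ℓ] v).eval z < (Polynomial.derivative^[n - ℓ] u).eval z
        else
          (Polynomial.derivative^[n - ℓ] u).eval z < (Polynomial.derivative^[n - ℓ] v).eval z)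
    (hpos : ∀ ℓ : ℕ, ℓ ≤ n - 1 →
        0 < (Polynomial.derivative^[ℓ] u).eval 1 ∧ 0 < (Polynomial.derivative^[ℓ] v).eval 1) :
    ∀ i : ℕ, ∀ _h1 : 1 ≤ i, ∀ _h2 : i ≤ n - 1,
      (Odd n →
        (Odd i → t ⟨i - 1, by omega⟩ < s ⟨i - 1, by omega⟩) ∧
        (Even i → s ⟨i - 1, by omega⟩ < t ⟨i - 1, by omega⟩)) ∧
      (Even n →
        (Odd i → s ⟨i - 1, by omega⟩ < t ⟨i - 1, by omega⟩) ∧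
        (Even i → t ⟨i - 1, by omega⟩ < s ⟨i - 1, by omega⟩)) := by
  intro i h1 h2
  have hS : IsRootSeq u s := ⟨hu, hs, hsroots⟩
  have hT : IsRootSeq v t := ⟨hv, ht, htroots⟩
  have hs1 := hS.apply_mem_of_re_mem (S := Set.Iio 1) fun z hz => (huroots z hz).2
  have ht1 := hT.apply_mem_of_re_mem (S := Set.Iio 1) fun z hz => (hvroots z hz).2
  have hpos0 := hpos 0 (Nat.zero_le _)
  exact stmt2_general Set.ordConnected_Iio hS hT
    (hS.leadingCoeff_pos (fun j => (hs1 j).le) hpos0.1)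
    (hT.leadingCoeff_pos (fun j => (ht1 j).le) hpos0.2)
    hs1 ht1 i h1 (by omega) h2 fun ℓ hℓ => hderiv ℓ (by omega)
end

section
/- The polynomial (X−1)·(Tr T)′ − k·Tr T ∈ ℝ[X] (which equals (z−1)^{k+1} Tr Φ′(z)) is divisible by q in ℝ[X]; the quotient R := ((X−1)(Tr T)′ − k·Tr T)/q has degree exactly k′−1; and R(x_ℓ) ≠ 0 for every root x_ℓ of p₀ (ℓ = 0,…,2(k′−1)). -/
open Polynomial Matrix

/-!
Let `W(v) = v₀ v₁' - v₀' v₁` for a polynomial curve `v`. Each factor `A` of `T` satisfies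
`W(A v) = (z - 1)² W(v) + (α + β) (v₁ + v₀ / β)²`, so on the real line every curve `T(z) w` turns
counterclockwise, strictly so away from `z = 1` once there are two factors. If `T(x)` is not scalar,
rotating an eigenvector shows that the discriminant `p` has at most a simple zero at `x`; if `T(x)`
is scalar, then `T'(x)` has no real eigenvector and `p` has at most a double zero. With a single
factor `p` has degree 1. Hence the roots of `p₀` are simple roots of `p`.

As `p = (Tr T)² - 4 (z - 1)^{2k}`, the operator `D_n f = (z - 1) f' - n f` satisfies
`D_{2k} p = 2 Tr T · D_k (Tr T)`. Here `Tr T` is coprime to `p`, because `Tr T (1) > 0`, and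
`deg p = 2k - 1`, so divisibility by `q`, degree and nonvanishing pass from `p` to `D_k (Tr T)`.
-/

section General

theorem eq_of_forall_aeval_eq {R A : Type*} [CommRing R] [CommRing A] [IsDomain A] [Infinite A]
    [Algebra R A] [FaithfulSMul R A] {f g : R[X]} (h : ∀ z : A, aeval z f = aeval z g) : f = g :=
  map_injective (algebraMap R A) (FaithfulSMul.algebraMap_injective R A) <|
    Polynomial.funext fun z => by simpa only [eval_map_algebraMap] using h z

theorem eval_iterate_derivative_eq_zero_of_X_sub_C_pow_dvd {R : Type*} [CommRing R] {f : R[X]}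
    {x : R} {m n : ℕ} (hmn : m < n) (h : (X - C x) ^ n ∣ f) : (derivative^[m] f).eval x = 0 :=
  dvd_iff_isRoot.1 <| (dvd_pow_self _ (Nat.sub_ne_zero_of_lt hmn)).trans
    (pow_sub_dvd_iterate_derivative_of_pow_dvd m h)

theorem eval_derivative_ne_zero_of_not_X_sub_C_pow_three_dvd {K : Type*} [Field K]
    [PerfectField K] {q f : K[X]} {x : K} (hf : Squarefree f) (hx : f.IsRoot x)
    (h : ¬ (X - C x) ^ 3 ∣ q ^ 2 * f) : (derivative (q ^ 2 * f)).eval x ≠ 0 := by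
  have hqx : q.eval x ≠ 0 := fun hq => h <| by
    rw [pow_succ]
    exact mul_dvd_mul (pow_dvd_pow_of_dvd (dvd_iff_isRoot.2 hq) 2) (dvd_iff_isRoot.2 hx)
  have hfx : (derivative f).eval x ≠ 0 :=
    (PerfectField.separable_iff_squarefree.2 hf).eval₂_derivative_ne_zero (RingHom.id K) hx
  rw [derivative_mul, eval_add, eval_mul, eval_mul, hx.eq_zero, mul_zero, zero_add, eval_pow]
  exact mul_ne_zero (pow_ne_zero 2 hqx) hfx

theorem isCoprime_sq_sub_C_mul_X_sub_C_pow {K : Type*} [Field K] {f : K[X]} {a c : K}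
    (hfa : f.eval a ≠ 0) (hc : c ≠ 0) (n : ℕ) :
    IsCoprime f (f ^ 2 - C c * (X - C a) ^ n) := by
  have hlin : IsCoprime f (X - C a) :=
    ((irreducible_X_sub_C a).coprime_iff_not_dvd.2 (mt dvd_iff_isRoot.1 hfa)).symm
  have hpow : IsCoprime f (C c * (X - C a) ^ n) :=
    (isCoprime_mul_unit_left_right (isUnit_C.2 hc.isUnit) _ _).2 hlin.pow_right
  simpa only [sq, neg_add_eq_sub] using hpow.neg_right.add_mul_left_right f

end General

section NonnegCoeff

/-- The subsemiring of polynomials with nonnegative coefficients, which contains the entries of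
`T`. -/
def nonnegCoeff (R : Type*) [Semiring R] [PartialOrder R] [IsOrderedRing R] :
    Subsemiring R[X] where
  carrier := {f | ∀ n, 0 ≤ f.coeff n}
  zero_mem' n := by rw [coeff_zero]
  one_mem' n := by
    rw [coeff_one]
    split_ifs <;> simp only [zero_le_one, le_refl]
  add_mem' hf hg n := by
    rw [coeff_add]
    exact add_nonneg (hf n) (hg n)
  mul_mem' hf hg n := by
    rw [coeff_mul]
    exact Finset.sum_nonneg fun i _ => mul_nonneg (hf i.1) (hg i.2)

variable {R : Type*} [Semiring R] [PartialOrder R]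

theorem X_mem_nonnegCoeff [IsOrderedRing R] : (X : R[X]) ∈ nonnegCoeff R := fun n => by
  rw [coeff_X]
  split_ifs <;> simp only [zero_le_one, le_refl]

theorem C_mem_nonnegCoeff [IsOrderedRing R] {a : R} (ha : 0 ≤ a) : C a ∈ nonnegCoeff R := by
  intro n
  rw [coeff_C]
  split_ifs <;> simp only [ha, le_refl]

theorem eval_pos_of_mem_nonnegCoeff [IsStrictOrderedRing R] {f : R[X]} (hf : f ∈ nonnegCoeff R)
    (hf0 : f ≠ 0) {x : R} (hx : 0 < x) : 0 < f.eval x := by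
  rw [eval_eq_sum, Polynomial.sum]
  exact Finset.sum_pos
    (fun n hn => mul_pos ((hf n).lt_of_ne' (mem_support_iff.1 hn)) (pow_pos hx n))
    (support_nonempty.2 hf0)

end NonnegCoeff

section MatrixTrace

variable {R : Type*} [CommRing R]

theorem coeff_trace {n : Type*} [Fintype n] [DecidableEq n] (M : Matrix n n R[X]) (m : ℕ) :
    M.trace.coeff m = ((matPolyEquiv M).coeff m).trace := by
  simp only [trace, diag_apply, finsetSum_coeff, matPolyEquiv_coeff_apply]

theorem natDegree_trace_le_natDegree_matPolyEquiv {n : Type*} [Fintype n] [DecidableEq n]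
    (M : Matrix n n R[X]) : M.trace.natDegree ≤ (matPolyEquiv M).natDegree :=
  natDegree_le_iff_coeff_eq_zero.2 fun m hm => by
    rw [coeff_trace, coeff_eq_zero_of_natDegree_lt hm, trace_zero]

theorem trace_list_prod_of_lower_unitriangular {l : List (Matrix (Fin 2) (Fin 2) R)}
    (hl : ∀ M ∈ l, M 0 0 = 1 ∧ M 0 1 = 0 ∧ M 1 1 = 1) : l.prod.trace = 2 := by
  have hprod : l.prod 0 0 = 1 ∧ l.prod 0 1 = 0 ∧ l.prod 1 1 = 1 := by
    refine List.prod_induction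
      (fun M : Matrix (Fin 2) (Fin 2) R => M 0 0 = 1 ∧ M 0 1 = 0 ∧ M 1 1 = 1) ?_ (by simp) hl
    rintro M N ⟨hM₀₀, hM₀₁, hM₁₁⟩ ⟨hN₀₀, hN₀₁, hN₁₁⟩
    simp [mul_apply, *]
  rw [trace_fin_two, hprod.1, hprod.2.2, one_add_one_eq_two]

end MatrixTrace

section DegreeDrop

theorem natDegree_X_sub_C_pow_le {R : Type*} [CommRing R] (a : R) (n : ℕ) :
    ((X - C a) ^ n).natDegree ≤ n := by
  simpa using natDegree_pow_le_of_le n (natDegree_X_sub_C_le a)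

theorem coeff_X_sub_C_pow_self {R : Type*} [CommRing R] (a : R) (n : ℕ) :
    ((X - C a) ^ n).coeff n = 1 := by
  rw [sub_eq_add_neg, ← C_neg, coeff_X_add_C_pow, Nat.sub_self, pow_zero, Nat.choose_self,
    Nat.cast_one, one_mul]

theorem coeff_X_sub_C_pow_succ_self {R : Type*} [CommRing R] (a : R) (n : ℕ) :
    ((X - C a) ^ (n + 1)).coeff n = -((n + 1) * a) := by
  rw [sub_eq_add_neg, ← C_neg, coeff_X_add_C_pow, Nat.add_sub_cancel_left, pow_one,
    Nat.choose_succ_self_right]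
  push_cast
  ring

variable {R : Type*} [CommRing R] [LinearOrder R] [IsStrictOrderedRing R]

theorem natDegree_sub_C_mul_X_sub_C_pow {f : R[X]} {n : ℕ} {a c : R} (ha : 0 < a) (hc : 0 < c)
    (hdeg : f.natDegree ≤ n + 1) (htop : f.coeff (n + 1) = c) (hnext : 0 ≤ f.coeff n) :
    (f - C c * (X - C a) ^ (n + 1)).natDegree = n := by
  refine natDegree_eq_of_le_of_coeff_ne_zero (natDegree_le_pred (n := n + 1) ?_ ?_) ?_
  · exact (natDegree_sub_le_of_le hdeg <|
      (natDegree_C_mul_le _ _).trans (natDegree_X_sub_C_pow_le a _)).trans (max_self _).le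
  · rw [coeff_sub, coeff_C_mul, coeff_X_sub_C_pow_self, htop, mul_one, sub_self]
  · rw [coeff_sub, coeff_C_mul, coeff_X_sub_C_pow_succ_self]
    have : 0 < c * ((n + 1) * a) := by positivity
    linarith

theorem natDegree_add_C_mul_X_sub_C_pow {f : R[X]} {n : ℕ} {c : R} (a : R) (hc : 0 < c)
    (hdeg : f.natDegree ≤ n) (htop : f.coeff n = c) :
    (f + C c * (X - C a) ^ n).natDegree = n := by
  refine natDegree_eq_of_le_of_coeff_ne_zero ?_ ?_
  · exact natDegree_add_le_of_degree_le hdeg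
      ((natDegree_C_mul_le _ _).trans (natDegree_X_sub_C_pow_le a _))
  · rw [coeff_add, coeff_C_mul, coeff_X_sub_C_pow_self, htop, mul_one]
    exact (add_pos hc hc).ne'

theorem natDegree_sq_sub_C_sq_mul_X_sub_C_pow {f : R[X]} {n : ℕ} {a c : R} (ha : 0 < a)
    (hc : 0 < c) (hdeg : f.natDegree ≤ n + 1) (htop : f.coeff (n + 1) = c)
    (hnext : 0 ≤ f.coeff n) :
    (f ^ 2 - C (c ^ 2) * (X - C a) ^ (2 * (n + 1))).natDegree = 2 * n + 1 := by
  have hsub := natDegree_sub_C_mul_X_sub_C_pow ha hc hdeg htop hnext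
  have hadd := natDegree_add_C_mul_X_sub_C_pow a hc hdeg htop
  have hsub_ne : f - C c * (X - C a) ^ (n + 1) ≠ 0 := fun h => by
    rw [sub_eq_zero.1 h, coeff_C_mul, coeff_X_sub_C_pow_succ_self] at hnext
    have : 0 < c * ((n + 1) * a) := by positivity
    linarith
  have hadd_ne : f + C c * (X - C a) ^ (n + 1) ≠ 0 :=
    ne_zero_of_natDegree_gt (n := n) (by omega)
  calc (f ^ 2 - C (c ^ 2) * (X - C a) ^ (2 * (n + 1))).natDegree
    _ = ((f - C c * (X - C a) ^ (n + 1)) * (f + C c * (X - C a) ^ (n + 1))).natDegree := by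
        rw [C_pow]; ring_nf
    _ = n + (n + 1) := by rw [natDegree_mul hsub_ne hadd_ne, hsub, hadd]
    _ = 2 * n + 1 := by ring

end DegreeDrop

section DerivNum

variable {R : Type*} [CommRing R]

/-- The numerator of the derivative of `f / (X - a) ^ n`, whose denominator is
`(X - a) ^ (n + 1)`. -/
noncomputable def derivNum (a : R) (n : ℕ) (f : R[X]) : R[X] :=
  (X - C a) * derivative f - C (n : R) * f

theorem X_sub_C_mul_derivative_X_sub_C_pow (a : R) (n : ℕ) :
    (X - C a) * derivative ((X - C a) ^ n) = C (n : R) * (X - C a) ^ n := by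
  rw [derivative_X_sub_C_pow]
  cases n with
  | zero => simp
  | succ n => rw [Nat.add_sub_cancel, pow_succ]; ring

theorem derivNum_sq_sub_C_mul_X_sub_C_pow (a c : R) (n : ℕ) (f : R[X]) :
    derivNum a (2 * n) (f ^ 2 - C c * (X - C a) ^ (2 * n)) = 2 * (f * derivNum a n f) := by
  have hpow := X_sub_C_mul_derivative_X_sub_C_pow a (2 * n)
  simp only [derivNum, derivative_sub, derivative_C_mul, derivative_sq, Nat.cast_mul,
    Nat.cast_ofNat, C_mul, C_ofNat] at hpow ⊢
  linear_combination -C c * hpow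

theorem eval_derivNum_of_isRoot {a x : R} {f : R[X]} (hx : f.IsRoot x) (n : ℕ) :
    (derivNum a n f).eval x = (x - a) * (derivative f).eval x := by
  simp only [derivNum, eval_sub, eval_mul, eval_X, eval_C, hx.eq_zero, mul_zero, sub_zero]

theorem dvd_derivNum_of_sq_dvd {q f : R[X]} (h : q ^ 2 ∣ f) (a : R) (n : ℕ) :
    q ∣ derivNum a n f := by
  have hder : q ∣ derivative f := by simpa using pow_sub_one_dvd_derivative_of_pow_dvd h
  exact dvd_sub (hder.mul_left _) (((dvd_pow_self q two_ne_zero).trans h).mul_left _)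

theorem coeff_derivNum (a : R) (n m : ℕ) (f : R[X]) :
    (derivNum a n f).coeff m = (m - n) * f.coeff m - a * (m + 1) * f.coeff (m + 1) := by
  rw [derivNum, sub_mul, coeff_sub, coeff_sub, coeff_C_mul, coeff_C_mul]
  cases m with
  | zero =>
    simp only [mul_coeff_zero, coeff_X_zero, coeff_derivative]
    push_cast
    ring
  | succ m =>
    simp only [coeff_X_mul, coeff_derivative]
    push_cast
    ring

theorem natDegree_derivNum [NoZeroDivisors R] [CharZero R] {f : R[X]} {n : ℕ}
    (hn : f.natDegree ≠ n) (a : R) : (derivNum a n f).natDegree = f.natDegree := by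
  rcases eq_or_ne f 0 with rfl | hf
  · simp [derivNum]
  refine natDegree_eq_of_le_of_coeff_ne_zero ?_ ?_
  · refine natDegree_le_iff_coeff_eq_zero.2 fun m hm => ?_
    rw [coeff_derivNum, coeff_eq_zero_of_natDegree_lt hm,
      coeff_eq_zero_of_natDegree_lt (hm.trans m.lt_succ_self), mul_zero, mul_zero, sub_zero]
  · rw [coeff_derivNum, coeff_eq_zero_of_natDegree_lt f.natDegree.lt_succ_self, mul_zero, sub_zero]
    exact mul_ne_zero (sub_ne_zero.2 (Nat.cast_injective.ne hn)) (leadingCoeff_ne_zero.2 hf)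

theorem derivNum_sq_mul_of_derivNum_eq_mul {f q g r : R[X]} {a c : R} {n : ℕ}
    (hp : f ^ 2 - C c * (X - C a) ^ (2 * n) = q ^ 2 * g) (hr : derivNum a n f = q * r) :
    derivNum a (2 * n) (q ^ 2 * g) = 2 * (f * (q * r)) := by
  rw [← hp, derivNum_sq_sub_C_mul_X_sub_C_pow, hr]

theorem natDegree_eq_of_derivNum_eq_mul [IsDomain R] [CharZero R] {f q g r : R[X]}
    {a c : R} {n : ℕ} (hf : f.natDegree = n)
    (hdeg : (f ^ 2 - C c * (X - C a) ^ (2 * n)).natDegree + 1 = 2 * n)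
    (hp : f ^ 2 - C c * (X - C a) ^ (2 * n) = q ^ 2 * g) (hr : derivNum a n f = q * r) :
    g.natDegree = 2 * r.natDegree + 1 := by
  rw [hp] at hdeg
  have hD : (2 * (f * (q * r))).natDegree = (q ^ 2 * g).natDegree := by
    rw [← derivNum_sq_mul_of_derivNum_eq_mul hp hr, natDegree_derivNum (by omega)]
  obtain ⟨-, hg⟩ := mul_ne_zero_iff.1 (ne_zero_of_natDegree_gt (n := 0) (p := q ^ 2 * g) (by omega))
  obtain ⟨h2, hfqr⟩ :=
    mul_ne_zero_iff.1 (ne_zero_of_natDegree_gt (n := 0) (p := 2 * (f * (q * r))) (by omega))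
  obtain ⟨hf0, hqr⟩ := mul_ne_zero_iff.1 hfqr
  obtain ⟨hq, hr0⟩ := mul_ne_zero_iff.1 hqr
  rw [natDegree_mul (pow_ne_zero 2 hq) hg, natDegree_pow] at hD hdeg
  rw [natDegree_mul h2 hfqr, natDegree_mul hf0 hqr, natDegree_mul hq hr0, natDegree_ofNat] at hD
  omega

theorem eval_ne_zero_of_derivNum_eq_mul [IsDomain R] {f q g r : R[X]} {a c x : R}
    {n : ℕ} (hxa : x ≠ a)
    (hp : f ^ 2 - C c * (X - C a) ^ (2 * n) = q ^ 2 * g) (hr : derivNum a n f = q * r)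
    (hx : g.IsRoot x) (hder : (derivative (q ^ 2 * g)).eval x ≠ 0) : r.eval x ≠ 0 := by
  intro hrx
  have hroot : (q ^ 2 * g).IsRoot x := hx.dvd (dvd_mul_left g _)
  have h := eval_derivNum_of_isRoot (a := a) hroot (2 * n)
  simp only [derivNum_sq_mul_of_derivNum_eq_mul hp hr, eval_mul, hrx, mul_zero] at h
  exact mul_ne_zero (sub_ne_zero.2 hxa) hder h.symm

theorem dvd_derivNum_of_sq_sub_eq_sq_mul {K : Type*} [Field K] [NeZero (2 : K)]
    {f q g : K[X]} {a c : K} {n : ℕ} (hfa : f.eval a ≠ 0) (hc : c ≠ 0)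
    (hp : f ^ 2 - C c * (X - C a) ^ (2 * n) = q ^ 2 * g) : q ∣ derivNum a n f := by
  have hcop : IsCoprime f (q ^ 2 * g) := hp ▸ isCoprime_sq_sub_C_mul_X_sub_C_pow hfa hc (2 * n)
  have hqf : IsCoprime q f :=
    (hcop.of_isCoprime_of_dvd_right ((dvd_pow_self q two_ne_zero).mul_right g)).symm
  have hdvd : q ∣ 2 * (f * derivNum a n f) := by
    rw [← derivNum_sq_sub_C_mul_X_sub_C_pow a c n f, hp]
    exact dvd_derivNum_of_sq_dvd (dvd_mul_right _ _) a (2 * n)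
  rw [← C_ofNat, (isUnit_C.2 (NeZero.ne (2 : K)).isUnit).dvd_mul_left] at hdvd
  exact hqf.dvd_of_dvd_mul_left hdvd

end DerivNum

section Rotation

/-- The Wronskian of the coordinates of a polynomial curve `v` in the plane, the determinant of
`v` and its velocity: its sign is the sense in which `v` rotates around the origin. -/
noncomputable def curveWronskian {R : Type*} [CommRing R] (v : Fin 2 → R[X]) : R[X] :=
  wronskian (v 0) (v 1)

theorem eval_curveWronskian_mulVec_C {R : Type*} [CommRing R] (M : Matrix (Fin 2) (Fin 2) R[X])
    (w : Fin 2 → R) (x : R) :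
    (curveWronskian (M *ᵥ (C ∘ w))).eval x =
      (M.map (eval x) *ᵥ w) 0 * ((M.map derivative).map (eval x) *ᵥ w) 1 -
        (M.map (eval x) *ᵥ w) 1 * ((M.map derivative).map (eval x) *ᵥ w) 0 := by
  simp only [curveWronskian, wronskian, mulVec, vec2_dotProduct, Function.comp_apply,
    derivative_add, derivative_mul, derivative_C, mul_zero, add_zero, eval_sub, eval_mul, eval_add,
    eval_C, map_apply]
  ring

theorem derivative_discr {R : Type*} [CommRing R] (M : Matrix (Fin 2) (Fin 2) R[X]) :
    derivative M.discr =
      2 * (2 * (M * M.map derivative).trace - M.trace * (M.map derivative).trace) := by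
  simp only [discr_fin_two, trace_fin_two, det_fin_two, mul_apply, Fin.sum_univ_two, map_apply,
    derivative_sub, derivative_add, derivative_mul, derivative_sq, derivative_ofNat, C_ofNat]
  ring

theorem derivative_derivative_discr {R : Type*} [CommRing R] (M : Matrix (Fin 2) (Fin 2) R[X]) :
    derivative (derivative M.discr) = 2 * (M.map derivative).discr +
      2 * (2 * (M * (M.map derivative).map derivative).trace -
        M.trace * ((M.map derivative).map derivative).trace) := by
  rw [derivative_discr]
  simp only [discr_fin_two, trace_fin_two, det_fin_two, mul_apply, Fin.sum_univ_two, map_apply,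
    derivative_sub, derivative_add, derivative_mul, derivative_ofNat]
  ring

variable {K : Type*} [Field K] [NeZero (2 : K)]

theorem exists_eigenvector_of_discr_eq_zero {B : Matrix (Fin 2) (Fin 2) K} (hB : B.discr = 0) :
    ∃ w ≠ 0, w 0 * (B *ᵥ w) 1 - w 1 * (B *ᵥ w) 0 = 0 := by
  rw [discr_fin_two, trace_fin_two, det_fin_two] at hB
  by_cases h : ![2 * B 0 1, B 1 1 - B 0 0] = 0
  · have hb : B 0 1 = 0 := by simpa [two_ne_zero] using congrFun h 0
    exact ⟨![0, 1], by simp, by simp [mulVec, dotProduct, hb]⟩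
  · refine ⟨_, h, ?_⟩
    simp only [mulVec, vec2_dotProduct, cons_val_zero, cons_val_one]
    linear_combination B 0 1 * hB

/-- The hypothesis `htangent` says that the line `A + ε B` is tangent to the cone `discr = 0` at
`A`. -/
theorem eq_smul_one_of_discr_eq_zero {A B : Matrix (Fin 2) (Fin 2) K}
    (hAB : ∀ w, w ≠ 0 → (A *ᵥ w) 0 * (B *ᵥ w) 1 - (A *ᵥ w) 1 * (B *ᵥ w) 0 ≠ 0)
    (hA : A.discr = 0) (htangent : 2 * (A * B).trace - A.trace * B.trace = 0) :
    ∃ s : K, A = s • 1 := by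
  obtain ⟨s, n, hs, hn⟩ : ∃ s n, A 0 0 = s + n ∧ A 1 1 = s - n :=
    ⟨(A 0 0 + A 1 1) / 2, (A 0 0 - A 1 1) / 2, by field_simp; ring, by field_simp; ring⟩
  have hnil : n ^ 2 + A 0 1 * A 1 0 = 0 := by
    rw [discr_fin_two, trace_fin_two, det_fin_two, hs, hn] at hA
    refine (mul_eq_zero.1 (?_ : (2 * 2 : K) * _ = 0)).resolve_left
      (mul_ne_zero two_ne_zero two_ne_zero)
    linear_combination hA
  have hdir : n * (B 0 0 - B 1 1) + A 0 1 * B 1 0 + A 1 0 * B 0 1 = 0 := by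
    simp only [trace_fin_two, mul_apply, Fin.sum_univ_two, hs, hn] at htangent
    refine (mul_eq_zero.1 (?_ : (2 : K) * _ = 0)).resolve_left two_ne_zero
    linear_combination htangent
  -- The columns of the adjugate of the nilpotent matrix `A - s` are eigenvectors of `A`.
  have hcol₀ : ![n, A 1 0] = 0 := by
    by_contra h
    refine hAB _ h ?_
    simp only [mulVec, vec2_dotProduct, cons_val_zero, cons_val_one, hs, hn]
    linear_combination (s * B 1 0 + A 1 0 * B 1 1 + n * B 1 0) * hnil - s * A 1 0 * hdir
  have hcol₁ : ![A 0 1, -n] = 0 := by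
    by_contra h
    refine hAB _ h ?_
    simp only [mulVec, vec2_dotProduct, cons_val_zero, cons_val_one, hs, hn]
    linear_combination s * A 0 1 * hdir + (n * B 0 1 - A 0 1 * B 0 0 - s * B 0 1) * hnil
  have hn0 : n = 0 := by simpa using congrFun hcol₀ 0
  have hc : A 1 0 = 0 := by simpa using congrFun hcol₀ 1
  have hb : A 0 1 = 0 := by simpa using congrFun hcol₁ 0
  refine ⟨s, ?_⟩
  ext i j
  fin_cases i <;> fin_cases j <;> simp [hs, hn, hn0, hb, hc]

theorem not_X_sub_C_pow_three_dvd_discr {M : Matrix (Fin 2) (Fin 2) K[X]} {x : K}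
    (hM : ∀ w : Fin 2 → K, w ≠ 0 → (curveWronskian (M *ᵥ (C ∘ w))).eval x ≠ 0) :
    ¬ (X - C x) ^ 3 ∣ M.discr := by
  intro hdvd
  simp only [eval_curveWronskian_mulVec_C] at hM
  have eval_discr (N : Matrix (Fin 2) (Fin 2) K[X]) :
      N.discr.eval x = (N.map (eval x)).discr := by
    simp [discr_fin_two, trace_fin_two, det_fin_two]
  have eval_polar (N : Matrix (Fin 2) (Fin 2) K[X]) :
      (2 * (M * N).trace - M.trace * N.trace).eval x =
        2 * (M.map (eval x) * N.map (eval x)).trace -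
          (M.map (eval x)).trace * (N.map (eval x)).trace := by
    simp [trace_fin_two, mul_apply]
  have h₀ : M.discr.eval x = 0 :=
    eval_iterate_derivative_eq_zero_of_X_sub_C_pow_dvd (m := 0) (by norm_num) hdvd
  have h₁ : (derivative M.discr).eval x = 0 :=
    eval_iterate_derivative_eq_zero_of_X_sub_C_pow_dvd (m := 1) (by norm_num) hdvd
  have h₂ : (derivative (derivative M.discr)).eval x = 0 :=
    eval_iterate_derivative_eq_zero_of_X_sub_C_pow_dvd (m := 2) (by norm_num) hdvd
  rw [eval_discr] at h₀
  rw [derivative_discr, eval_mul, eval_ofNat, eval_polar, mul_eq_zero_iff_left two_ne_zero] at h₁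
  obtain ⟨s, hs⟩ := eq_smul_one_of_discr_eq_zero hM h₀ h₁
  have hdiscr : ((M.map derivative).map (eval x)).discr = 0 := by
    rw [derivative_derivative_discr, eval_add, eval_mul, eval_mul, eval_discr, eval_polar, hs,
      eval_ofNat, smul_mul, one_mul, trace_smul, trace_smul, trace_one] at h₂
    refine (mul_eq_zero_iff_left (two_ne_zero (α := K))).1 (Eq.trans ?_ h₂)
    simp only [smul_eq_mul, Fintype.card_fin]
    push_cast
    ring
  obtain ⟨w, hw, hpar⟩ := exists_eigenvector_of_discr_eq_zero hdiscr
  refine hM w hw ?_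
  rw [hs]
  simp only [smul_mulVec, one_mulVec, Pi.smul_apply, smul_eq_mul]
  linear_combination s * hpar

end Rotation

section AztecDiamond

variable {K : Type*} [Field K]

/-- The transition matrix `aztecA a b` with polynomial entries. -/
noncomputable def aztecAPoly (a b : K) : Matrix (Fin 2) (Fin 2) K[X] :=
  !![X + C (a * b⁻¹), C (a + b); X * C (a⁻¹ + b⁻¹), X + C (b * a⁻¹)]

/-- The product `aztecT α β` with polynomial entries. -/
noncomputable def aztecTPoly {k : ℕ} (α β : Fin k → K) : Matrix (Fin 2) (Fin 2) K[X] :=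
  (List.ofFn fun m => aztecAPoly (α m) (β m)).prod

theorem aztecTPoly_succ {k : ℕ} (α β : Fin (k + 1) → K) :
    aztecTPoly α β = aztecAPoly (α 0) (β 0) * aztecTPoly (Fin.tail α) (Fin.tail β) := by
  rw [aztecTPoly, List.ofFn_succ, List.prod_cons]
  rfl

theorem trace_aztecT {k : ℕ} (α β : Fin k → ℝ) (z : ℂ) :
    (aztecT α β z).trace = aeval z (aztecTPoly α β).trace := by
  have hfactor (a b : ℝ) : aztecA a b z = (aeval z).mapMatrix (aztecAPoly a b) := by
    ext i j
    fin_cases i <;> fin_cases j <;> simp [aztecA, aztecAPoly]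
  have hT : aztecT α β z = (aeval z).mapMatrix (aztecTPoly α β) := by
    simp only [aztecT, aztecTPoly, hfactor, map_list_prod, List.map_ofFn, Function.comp_def]
  rw [hT, AlgHom.mapMatrix_apply, ← AddMonoidHom.map_trace]

theorem det_aztecAPoly {a b : K} (ha : a ≠ 0) (hb : b ≠ 0) :
    (aztecAPoly a b).det = (X - C 1) ^ 2 := by
  have ha' : C a * C a⁻¹ = 1 := by rw [← C_mul, mul_inv_cancel₀ ha, C_1]
  have hb' : C b * C b⁻¹ = 1 := by rw [← C_mul, mul_inv_cancel₀ hb, C_1]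
  simp only [aztecAPoly, det_fin_two_of, C_mul, C_add, C_1]
  linear_combination (1 - X) * ha' + (C a * C a⁻¹ - X) * hb'

theorem det_aztecTPoly {k : ℕ} {α β : Fin k → K} (hα : ∀ m, α m ≠ 0) (hβ : ∀ m, β m ≠ 0) :
    (aztecTPoly α β).det = (X - C 1) ^ (2 * k) := by
  rw [aztecTPoly, ← coe_detMonoidHom, map_list_prod, List.map_ofFn, List.prod_ofFn]
  simp [det_aztecAPoly, hα, hβ, pow_mul]

theorem discr_aztecTPoly {k : ℕ} {α β : Fin k → K} (hα : ∀ m, α m ≠ 0) (hβ : ∀ m, β m ≠ 0) :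
    (aztecTPoly α β).discr = (aztecTPoly α β).trace ^ 2 - C (2 ^ 2) * (X - C 1) ^ (2 * k) := by
  rw [discr_fin_two, det_aztecTPoly hα hβ, ← C_ofNat]
  norm_num

theorem curveWronskian_aztecAPoly_mulVec {a b : K} (ha : a ≠ 0) (hb : b ≠ 0)
    (v : Fin 2 → K[X]) :
    curveWronskian (aztecAPoly a b *ᵥ v) =
      (X - C 1) ^ 2 * curveWronskian v + C (a + b) * (v 1 + C b⁻¹ * v 0) ^ 2 := by
  have ha' : C a * C a⁻¹ = 1 := by rw [← C_mul, mul_inv_cancel₀ ha, C_1]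
  have hb' : C b * C b⁻¹ = 1 := by rw [← C_mul, mul_inv_cancel₀ hb, C_1]
  simp only [curveWronskian, wronskian, aztecAPoly, mulVec, vec2_dotProduct, of_apply,
    cons_val_zero, cons_val_one, derivative_add, derivative_mul, derivative_X, derivative_C, C_mul,
    C_add, C_1]
  linear_combination (v 0 * derivative (v 1) - derivative (v 0) * v 1) *
      ((1 - X) * ha' + (C a * C a⁻¹ - X) * hb') +
    (v 0 ^ 2 * C b⁻¹ + v 0 * v 1) * (ha' - hb')

theorem matPolyEquiv_aztecAPoly (a b : K) :
    matPolyEquiv (aztecAPoly a b) =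
      X * C !![1, 0; a⁻¹ + b⁻¹, 1] + C !![a * b⁻¹, a + b; 0, b * a⁻¹] := by
  ext n i j
  rw [matPolyEquiv_coeff_apply]
  rcases n with _ | _ | n <;> fin_cases i <;> fin_cases j <;>
    simp [aztecAPoly, coeff_X, coeff_C]

theorem natDegree_matPolyEquiv_aztecAPoly_le (a b : K) :
    (matPolyEquiv (aztecAPoly a b)).natDegree ≤ 1 := by
  rw [matPolyEquiv_aztecAPoly]
  compute_degree

theorem coeff_one_matPolyEquiv_aztecAPoly (a b : K) :
    (matPolyEquiv (aztecAPoly a b)).coeff 1 = !![1, 0; a⁻¹ + b⁻¹, 1] := by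
  simp [matPolyEquiv_aztecAPoly, coeff_C]

theorem natDegree_trace_aztecTPoly_le {k : ℕ} (α β : Fin k → K) :
    (aztecTPoly α β).trace.natDegree ≤ k := by
  have hT : (matPolyEquiv (aztecTPoly α β)).natDegree ≤ k := by
    rw [aztecTPoly, map_list_prod, List.map_ofFn]
    refine (natDegree_list_prod_le _).trans ?_
    refine (List.sum_le_card_nsmul _ 1 ?_).trans (by simp)
    simp [natDegree_matPolyEquiv_aztecAPoly_le]
  exact (natDegree_trace_le_natDegree_matPolyEquiv _).trans hT

theorem coeff_trace_aztecTPoly {k : ℕ} (α β : Fin k → K) :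
    (aztecTPoly α β).trace.coeff k = 2 := by
  have htop : (matPolyEquiv (aztecTPoly α β)).coeff k =
      (List.ofFn fun m => (matPolyEquiv (aztecAPoly (α m) (β m))).coeff 1).prod := by
    rw [aztecTPoly, map_list_prod, List.map_ofFn]
    simpa [List.map_ofFn, Function.comp_def] using coeff_list_prod_of_natDegree_le
      (List.ofFn fun m => matPolyEquiv (aztecAPoly (α m) (β m))) 1
      (by simp [natDegree_matPolyEquiv_aztecAPoly_le])
  rw [coeff_trace, htop]
  refine trace_list_prod_of_lower_unitriangular ?_
  simp [coeff_one_matPolyEquiv_aztecAPoly]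

theorem natDegree_trace_aztecTPoly [NeZero (2 : K)] {k : ℕ} (α β : Fin k → K) :
    (aztecTPoly α β).trace.natDegree = k :=
  natDegree_eq_of_le_of_coeff_ne_zero (natDegree_trace_aztecTPoly_le α β)
    ((coeff_trace_aztecTPoly α β).trans_ne two_ne_zero)

theorem eval_aztecTPoly_mulVec_C_ne_zero {k : ℕ} {α β : Fin k → K} (hα : ∀ m, α m ≠ 0)
    (hβ : ∀ m, β m ≠ 0) {x : K} (hx : x ≠ 1) {w : Fin 2 → K} (hw : w ≠ 0) :
    eval x ∘ (aztecTPoly α β *ᵥ (C ∘ w)) ≠ 0 := by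
  have hdet : ((aztecTPoly α β).map (eval x)).det ≠ 0 := by
    rw [← coe_evalRingHom, ← RingHom.mapMatrix_apply, ← RingHom.map_det, det_aztecTPoly hα hβ]
    simp [sub_ne_zero.2 hx]
  have heval : eval x ∘ (aztecTPoly α β *ᵥ (C ∘ w)) = (aztecTPoly α β).map (eval x) *ᵥ w := by
    ext i
    fin_cases i <;> simp [mulVec, vec2_dotProduct]
  rw [heval]
  exact mt (eq_zero_of_mulVec_eq_zero hdet) hw

variable [LinearOrder K] [IsStrictOrderedRing K]

theorem trace_aztecTPoly_mem_nonnegCoeff {k : ℕ} {α β : Fin k → K} (hα : ∀ m, 0 < α m)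
    (hβ : ∀ m, 0 < β m) : (aztecTPoly α β).trace ∈ nonnegCoeff K := by
  have hfactor {a b : K} (ha : 0 < a) (hb : 0 < b) :
      aztecAPoly a b ∈ (nonnegCoeff K).matrix := by
    have hX := X_mem_nonnegCoeff (R := K)
    have hC {c : K} (hc : 0 < c) := C_mem_nonnegCoeff hc.le
    intro i j
    fin_cases i <;> fin_cases j
    · exact add_mem hX (hC (by positivity))
    · exact hC (by positivity)
    · exact (nonnegCoeff K).mul_mem hX (hC (by positivity))
    · exact add_mem hX (hC (by positivity))
  have hT : aztecTPoly α β ∈ (nonnegCoeff K).matrix :=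
    list_prod_mem (List.forall_mem_ofFn_iff.2 fun m => hfactor (hα m) (hβ m))
  exact sum_mem fun i _ => hT i i

theorem eval_one_trace_aztecTPoly_pos {k : ℕ} {α β : Fin k → K} (hα : ∀ m, 0 < α m)
    (hβ : ∀ m, 0 < β m) : 0 < (aztecTPoly α β).trace.eval 1 := by
  refine eval_pos_of_mem_nonnegCoeff (trace_aztecTPoly_mem_nonnegCoeff hα hβ) (fun h => ?_)
    one_pos
  have htop := coeff_trace_aztecTPoly α β
  rw [h, coeff_zero] at htop
  exact two_ne_zero htop.symm

theorem natDegree_discr_aztecTPoly {k : ℕ} {α β : Fin (k + 1) → K} (hα : ∀ m, 0 < α m)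
    (hβ : ∀ m, 0 < β m) : (aztecTPoly α β).discr.natDegree = 2 * k + 1 := by
  rw [discr_aztecTPoly (fun m => (hα m).ne') (fun m => (hβ m).ne')]
  exact natDegree_sq_sub_C_sq_mul_X_sub_C_pow one_pos two_pos (natDegree_trace_aztecTPoly_le α β)
    (coeff_trace_aztecTPoly α β) (trace_aztecTPoly_mem_nonnegCoeff hα hβ k)

theorem eval_curveWronskian_aztecAPoly_mulVec_nonneg {a b x : K} (ha : 0 < a) (hb : 0 < b)
    {v : Fin 2 → K[X]} (hv : 0 ≤ (curveWronskian v).eval x) :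
    0 ≤ (curveWronskian (aztecAPoly a b *ᵥ v)).eval x := by
  simp only [curveWronskian_aztecAPoly_mulVec ha.ne' hb.ne', eval_add, eval_mul, eval_pow, eval_C]
  have := add_pos ha hb
  positivity

theorem eval_curveWronskian_aztecTPoly_mulVec_nonneg {k : ℕ} {α β : Fin k → K}
    (hα : ∀ m, 0 < α m) (hβ : ∀ m, 0 < β m) {v : Fin 2 → K[X]} {x : K}
    (hv : 0 ≤ (curveWronskian v).eval x) :
    0 ≤ (curveWronskian (aztecTPoly α β *ᵥ v)).eval x := by
  induction k with
  | zero => simpa [aztecTPoly] using hv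
  | succ k ih =>
    rw [aztecTPoly_succ, ← mulVec_mulVec]
    exact eval_curveWronskian_aztecAPoly_mulVec_nonneg (hα 0) (hβ 0)
      (ih (fun m => hα m.succ) fun m => hβ m.succ)

theorem eval_eq_zero_of_eval_curveWronskian_aztecAPoly_mulVec_eq_zero {a b x : K} (ha : 0 < a)
    (hb : 0 < b) (hx : x ≠ 1) {v : Fin 2 → K[X]} (hv : 0 ≤ (curveWronskian v).eval x)
    (h : (curveWronskian (aztecAPoly a b *ᵥ v)).eval x = 0) :
    (curveWronskian v).eval x = 0 ∧ (v 1).eval x + b⁻¹ * (v 0).eval x = 0 := by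
  have hab := add_pos ha hb
  simp only [curveWronskian_aztecAPoly_mulVec ha.ne' hb.ne', eval_add, eval_mul, eval_pow, eval_sub,
    eval_X, eval_C] at h
  obtain ⟨hW, hshear⟩ := (add_eq_zero_iff_of_nonneg (by positivity) (by positivity)).1 h
  exact ⟨(mul_eq_zero.1 hW).resolve_left (pow_ne_zero 2 (sub_ne_zero.2 hx)),
    pow_eq_zero_iff two_ne_zero |>.1 ((mul_eq_zero.1 hshear).resolve_left hab.ne')⟩

theorem eval_curveWronskian_aztecAPoly_mulVec_mulVec_pos {a b c d x : K} (ha : 0 < a) (hb : 0 < b)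
    (hc : 0 < c) (hd : 0 < d) (hx : x ≠ 1) {v : Fin 2 → K[X]} (hv : eval x ∘ v ≠ 0)
    (hWv : 0 ≤ (curveWronskian v).eval x) :
    0 < (curveWronskian (aztecAPoly a b *ᵥ (aztecAPoly c d *ᵥ v))).eval x := by
  have hWu := eval_curveWronskian_aztecAPoly_mulVec_nonneg hc hd hWv
  refine (eval_curveWronskian_aztecAPoly_mulVec_nonneg ha hb hWu).lt_of_ne' fun hW => hv ?_
  obtain ⟨hWu0, hu⟩ :=
    eval_eq_zero_of_eval_curveWronskian_aztecAPoly_mulVec_eq_zero ha hb hx hWu hW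
  obtain ⟨-, hv₁⟩ :=
    eval_eq_zero_of_eval_curveWronskian_aztecAPoly_mulVec_eq_zero hc hd hx hWv hWu0
  have hu₀ : (x - 1) * (c⁻¹ + b⁻¹) * (v 0).eval x = 0 := by
    simp only [aztecAPoly, mulVec, vec2_dotProduct, of_apply, cons_val_zero, cons_val_one, eval_add,
      eval_mul, eval_X, eval_C] at hu
    linear_combination hu - (x + d * c⁻¹ + b⁻¹ * (c + d)) * hv₁ +
      (c⁻¹ + b⁻¹) * (v 0).eval x * mul_inv_cancel₀ hd.ne'
  have hv0 : (v 0).eval x = 0 :=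
    (mul_eq_zero.1 hu₀).resolve_left (mul_ne_zero (sub_ne_zero.2 hx) (by positivity))
  rw [hv0, mul_zero, add_zero] at hv₁
  ext i
  fin_cases i
  exacts [hv0, hv₁]

theorem eval_curveWronskian_aztecTPoly_mulVec_C_pos {k : ℕ} {α β : Fin (k + 2) → K}
    (hα : ∀ m, 0 < α m) (hβ : ∀ m, 0 < β m) {x : K} (hx : x ≠ 1) {w : Fin 2 → K} (hw : w ≠ 0) :
    0 < (curveWronskian (aztecTPoly α β *ᵥ (C ∘ w))).eval x := by
  simp only [aztecTPoly_succ, ← mulVec_mulVec]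
  refine eval_curveWronskian_aztecAPoly_mulVec_mulVec_pos (hα 0) (hβ 0) (hα 1) (hβ 1) hx ?_ ?_
  · exact eval_aztecTPoly_mulVec_C_ne_zero (fun m => (hα _).ne') (fun m => (hβ _).ne') hx hw
  · refine eval_curveWronskian_aztecTPoly_mulVec_nonneg (fun m => hα _) (fun m => hβ _) ?_
    simp [curveWronskian, wronskian]

theorem not_X_sub_C_pow_three_dvd_discr_aztecTPoly {k : ℕ} (hk : 1 ≤ k) {α β : Fin k → K}
    (hα : ∀ m, 0 < α m) (hβ : ∀ m, 0 < β m) {x : K} (hx : x ≠ 1) :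
    ¬ (X - C x) ^ 3 ∣ (aztecTPoly α β).discr := by
  match k, hk with
  | 1, _ =>
    intro hdvd
    have hdeg := natDegree_discr_aztecTPoly hα hβ
    have hle := natDegree_le_of_dvd hdvd (ne_zero_of_natDegree_gt (n := 0) (by omega))
    rw [natDegree_pow, natDegree_X_sub_C] at hle
    omega
  | k + 2, _ =>
    exact not_X_sub_C_pow_three_dvd_discr fun w hw =>
      (eval_curveWronskian_aztecTPoly_mulVec_C_pos hα hβ hx hw).ne'

end AztecDiamond

theorem stmt6_general {K : Type*} [Field K] [LinearOrder K] [IsStrictOrderedRing K] {k : ℕ}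
    (hk : 1 ≤ k) {α β : Fin k → K} (hα : ∀ m, 0 < α m) (hβ : ∀ m, 0 < β m) {q p₀ : K[X]}
    (hp₀sf : Squarefree p₀)
    (hfact : (aztecTPoly α β).trace ^ 2 - 4 * (X - 1) ^ (2 * k) = q ^ 2 * p₀) :
    q ∣ (X - 1) * derivative (aztecTPoly α β).trace - C (k : K) * (aztecTPoly α β).trace ∧
      ∀ R : K[X],
        (X - 1) * derivative (aztecTPoly α β).trace - C (k : K) * (aztecTPoly α β).trace = q * R →
        p₀.natDegree = 2 * R.natDegree + 1 ∧ ∀ x, p₀.IsRoot x → R.eval x ≠ 0 := by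
  have hdiscr := discr_aztecTPoly (fun m => (hα m).ne') (fun m => (hβ m).ne')
  have hsq : (aztecTPoly α β).trace ^ 2 - C (2 ^ 2) * (X - C 1) ^ (2 * k) = q ^ 2 * p₀ := by
    rw [← hfact, C_pow, C_ofNat, C_1]
    norm_num
  have htr := (eval_one_trace_aztecTPoly_pos hα hβ).ne'
  rw [← C_1]
  refine ⟨dvd_derivNum_of_sq_sub_eq_sq_mul htr (by norm_num) hsq,
    fun R hR => ⟨?_, fun x hx => ?_⟩⟩
  · refine natDegree_eq_of_derivNum_eq_mul (natDegree_trace_aztecTPoly α β) ?_ hsq hR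
    obtain ⟨j, rfl⟩ := Nat.exists_eq_add_of_le' hk
    rw [← hdiscr, natDegree_discr_aztecTPoly hα hβ]
    ring
  · have hx1 : x ≠ 1 := by
      rintro rfl
      simpa [hx.eq_zero, htr, Nat.one_le_iff_ne_zero.1 hk] using congrArg (eval 1) hsq
    refine eval_ne_zero_of_derivNum_eq_mul hx1 hsq hR hx
      (eval_derivative_ne_zero_of_not_X_sub_C_pow_three_dvd hp₀sf hx ?_)
    rw [← hsq, ← hdiscr]
    exact not_X_sub_C_pow_three_dvd_discr_aztecTPoly hk hα hβ hx1

/-- the polynomial `(X−1)·(Tr T)′ − k·Tr T` is divisible by `q`, the quotient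
`R` has degree exactly `k′−1`, and `R` does not vanish at any root `x_ℓ` of `p₀`. -/
theorem stmt6 (k : ℕ) (hk : 1 ≤ k) (α β : Fin k → ℝ)
    (hα : ∀ m, 0 < α m) (hβ : ∀ m, 0 < β m)
    (hprod : ∏ m, α m = ∏ m, β m)
    (trT p : Polynomial ℝ)
    (htr : ∀ z : ℂ, Polynomial.aeval z trT = Matrix.trace (aztecT α β z))
    (hp : ∀ z : ℂ, Polynomial.aeval z p
        = (Matrix.trace (aztecT α β z)) ^ 2 - 4 * (z - 1) ^ (2 * k))
    (k' : ℕ) (hk'1 : 1 ≤ k') (hk'k : k' ≤ k)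
    (q p₀ : Polynomial ℝ) (hq : q.Monic) (hp₀sf : Squarefree p₀)
    (hp₀lead : 0 < p₀.leadingCoeff) (hfact : p = q ^ 2 * p₀)
    (hp₀deg : p₀.natDegree = 2 * k' - 1)
    (x : Fin (2 * k' - 1) → ℝ) (hx0 : x ⟨0, by omega⟩ = 0) (hxanti : StrictAnti x)
    (hxroot : ∀ i, p₀.eval (x i) = 0) :
    q ∣ ((X - 1) * Polynomial.derivative trT - Polynomial.C (k : ℝ) * trT) ∧
    ∀ R : Polynomial ℝ,
      (X - 1) * Polynomial.derivative trT - Polynomial.C (k : ℝ) * trT = q * R →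
      R.natDegree = k' - 1 ∧ ∀ ℓ : Fin (2 * k' - 1), R.eval (x ℓ) ≠ 0 := by
  obtain rfl : trT = (aztecTPoly α β).trace :=
    eq_of_forall_aeval_eq fun z => (htr z).trans (trace_aztecT α β z)
  obtain rfl : p = (aztecTPoly α β).trace ^ 2 - 4 * (X - 1) ^ (2 * k) :=
    eq_of_forall_aeval_eq (A := ℂ) fun z => by simp [hp, htr, map_ofNat (aeval z) 4]
  obtain ⟨hdvd, hR⟩ := stmt6_general hk hα hβ hp₀sf hfact
  exact ⟨hdvd, fun R h => ⟨by have := (hR R h).1; omega, fun ℓ => (hR R h).2 _ (hxroot ℓ)⟩⟩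
end

section
/- Let z ∈ ℂ with Im z > 0. Then there exist nonzero z₀, z̃₀ ∈ ℂ such that the vectors (1, z₀) and (1, z̃₀) are eigenvectors of T(z), with 0 ≤ arg z₀ ≤ arg z and 0 ≤ arg(−z̃₀) ≤ arg z. In particular z₀ ≠ z̃₀, so T(z) has two linearly independent eigenvectors (is diagonalizable) and T(z) is not a scalar multiple of the identity. -/
open Polynomial Matrix

open ComplexConjugate

/-!
Attach to `v = (1, w)` the pair of Hermitian forms `H v = (Im w, Im (z * conj w))`; the sector
`0 ≤ arg w ≤ arg z` is where both are nonnegative. A matrix `M = !![p, q; r * z, s]` with positive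
weights satisfies `H (M v) ≥ P (H v)` entrywise, where `P = !![a, b; b * ‖z‖ ^ 2, a]`, `a = p * s`
and `b = q * r`. The matrices `P` have nonnegative entries, so these inequalities compose along
products; they commute, and `(‖z‖, 1)` is a common left Perron eigenvector, with eigenvalue
`t = a + b * ‖z‖`.

For an eigenvector `v` with eigenvalue `c` we get `(‖c‖ ^ 2 - P) (H v) ≥ 0`, and if `‖c‖ ^ 2 > t`
then `‖c‖ ^ 2 - P` has a nonnegative inverse, so `v` lies in the sector. Conjugating the adjugate by
`diag (1, -1)` swaps `p` and `s`, hence obeys the same inequality; it negates `w` and exchanges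
the two eigenvalues `c` and `c'`. Pairing both inequalities with `(‖z‖, 1)` shows that `t` lies
strictly between `‖c‖ ^ 2` and `‖c'‖ ^ 2`, so the dominant eigenvector has slope in the sector and
the other one has slope in its negative.
-/

/-- The adjugate of `M` conjugated by `diag (1, -1)`, written out entrywise. It turns an eigenvector
`(1, w)` of `M` into the eigenvector `(1, -w)` for the other eigenvalue. -/
def reflectedAdjugate {R : Type*} (M : Matrix (Fin 2) (Fin 2) R) : Matrix (Fin 2) (Fin 2) R :=
  !![M 1 1, M 0 1; M 1 0, M 0 0]

section TwoByTwo

variable {R : Type*} [CommRing R]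

theorem reflectedAdjugate_mul (M N : Matrix (Fin 2) (Fin 2) R) :
    reflectedAdjugate (M * N) = reflectedAdjugate N * reflectedAdjugate M := by
  ext i j
  fin_cases i <;> fin_cases j <;> simp [reflectedAdjugate, mul_apply, Fin.sum_univ_two] <;> ring

theorem mulVec_one_eq_smul_iff {M : Matrix (Fin 2) (Fin 2) R} {c w : R} :
    M *ᵥ ![1, w] = c • ![1, w] ↔ M 0 0 + M 0 1 * w = c ∧ M 1 0 + M 1 1 * w = c * w := by
  simp [funext_iff, Fin.forall_fin_two]

theorem reflectedAdjugate_mulVec {M : Matrix (Fin 2) (Fin 2) R} {c c' w : R}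
    (hw : M *ᵥ ![1, w] = c • ![1, w]) (htr : c + c' = M.trace) :
    reflectedAdjugate M *ᵥ ![1, -w] = c' • ![1, -w] := by
  obtain ⟨h₀, h₁⟩ := mulVec_one_eq_smul_iff.1 hw
  rw [trace_fin_two] at htr
  exact mulVec_one_eq_smul_iff.2
    ⟨show M 1 1 + M 0 1 * -w = c' by linear_combination -h₀ - htr,
      show M 1 0 + M 0 0 * -w = c' * -w by linear_combination h₁ + w * htr⟩

theorem exists_eigenvectors_of_apply_zero_one_ne_zero {K : Type*} [Field K] [IsAlgClosed K]
    {M : Matrix (Fin 2) (Fin 2) K} (hM : M 0 1 ≠ 0) :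
    ∃ c c' w w' : K, c + c' = M.trace ∧
      M *ᵥ ![1, w] = c • ![1, w] ∧ M *ᵥ ![1, w'] = c' • ![1, w'] := by
  obtain ⟨c, hc⟩ := IsAlgClosed.exists_root M.charpoly (by simp [charpoly_degree_eq_dim])
  have hroot : c ^ 2 - (M 0 0 + M 1 1) * c + (M 0 0 * M 1 1 - M 0 1 * M 1 0) = 0 := by
    simpa [IsRoot, charpoly_fin_two, trace_fin_two, det_fin_two] using hc
  refine ⟨c, M 0 0 + M 1 1 - c, (c - M 0 0) / M 0 1, (M 1 1 - c) / M 0 1,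
    by rw [trace_fin_two]; ring,
    mulVec_one_eq_smul_iff.2 ⟨?_, ?_⟩, mulVec_one_eq_smul_iff.2 ⟨?_, ?_⟩⟩ <;>
    field_simp
  · ring
  · linear_combination -hroot
  · ring
  · linear_combination -hroot

theorem linearIndependent_one_pair {K : Type*} [Field K] {w w' : K} (h : w ≠ w') :
    LinearIndependent K ![![1, w], ![1, w']] := by
  apply linearIndependent_rows_of_det_ne_zero (A := !![1, w; 1, w'])
  simpa [det_fin_two, sub_eq_zero] using h.symm

end TwoByTwo

/-- The Hermitian form with value `Im w` at `(1, w)`: it tests on which side of the edge `arg = 0`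
of the sector the slope of `v` lies. -/
noncomputable def lowerEdgeForm (v : Fin 2 → ℂ) : ℝ := (conj (v 0) * v 1).im

/-- The Hermitian form with value `Im (z * conj w)` at `(1, w)`: it tests on which side of the edge
`arg = arg z` of the sector the slope of `v` lies. -/
noncomputable def upperEdgeForm (z : ℂ) (v : Fin 2 → ℂ) : ℝ := (v 0 * conj (v 1) * z).im

/-- The combination of the two edge forms that vanishes when the slope of `v` is orthogonal to the
bisector of the sector. The weights make it a left eigenvector of the comparison matrix in
`SectorExpanding`. -/
noncomputable def bisectorForm (z : ℂ) (v : Fin 2 → ℂ) : ℝ :=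
  ‖z‖ * lowerEdgeForm v + upperEdgeForm z v

section Forms

variable (z c w : ℂ) (v : Fin 2 → ℂ)

theorem lowerEdgeForm_smul : lowerEdgeForm (c • v) = ‖c‖ ^ 2 * lowerEdgeForm v := by
  simp only [lowerEdgeForm, Pi.smul_apply, smul_eq_mul, map_mul, ← Complex.normSq_eq_norm_sq]
  rw [mul_mul_mul_comm, ← Complex.normSq_eq_conj_mul_self, Complex.im_ofReal_mul]

theorem upperEdgeForm_smul : upperEdgeForm z (c • v) = ‖c‖ ^ 2 * upperEdgeForm z v := by
  simp only [upperEdgeForm, Pi.smul_apply, smul_eq_mul, map_mul, ← Complex.normSq_eq_norm_sq]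
  rw [mul_mul_mul_comm, Complex.mul_conj, mul_assoc, Complex.im_ofReal_mul]

theorem bisectorForm_smul : bisectorForm z (c • v) = ‖c‖ ^ 2 * bisectorForm z v := by
  rw [bisectorForm, lowerEdgeForm_smul, upperEdgeForm_smul, bisectorForm]
  ring

@[simp]
theorem lowerEdgeForm_one : lowerEdgeForm ![1, w] = w.im := by
  simp [lowerEdgeForm]

@[simp]
theorem upperEdgeForm_one : upperEdgeForm z ![1, w] = (conj w * z).im := by
  simp [upperEdgeForm]

theorem bisectorForm_one_neg : bisectorForm z ![1, -w] = -bisectorForm z ![1, w] := by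
  simp only [bisectorForm, lowerEdgeForm_one, upperEdgeForm_one, map_neg, neg_mul, Complex.neg_im]
  ring

end Forms

theorem ne_zero_of_bisectorForm_ne_zero {z w : ℂ} (h : bisectorForm z ![1, w] ≠ 0) : w ≠ 0 := by
  rintro rfl
  simp [bisectorForm] at h

theorem arg_mem_Icc_of_edgeForms_nonneg {z w : ℂ} (hz : 0 < z.im) (hw : w ≠ 0)
    (hlower : 0 ≤ lowerEdgeForm ![1, w]) (hupper : 0 ≤ upperEdgeForm z ![1, w]) :
    w.arg ∈ Set.Icc 0 z.arg := by
  replace hlower : 0 ≤ w.im := by rwa [lowerEdgeForm_one] at hlower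
  refine ⟨Complex.arg_nonneg_iff.2 hlower, not_lt.1 fun hlt => hupper.not_gt ?_⟩
  have hz₀ : z ≠ 0 := by
    rintro rfl
    simp at hz
  have hzarg : 0 < z.arg :=
    (Complex.arg_nonneg_iff.2 hz.le).lt_of_ne' fun h => hz.ne' (Complex.arg_eq_zero_iff.1 h).2
  have hsin : 0 < Real.sin (w.arg - z.arg) :=
    Real.sin_pos_of_pos_of_lt_pi (sub_pos.2 hlt) (by linarith [Complex.arg_le_pi w])
  have hpolar : upperEdgeForm z ![1, w] = -(‖w‖ * ‖z‖ * Real.sin (w.arg - z.arg)) :=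
    calc upperEdgeForm z ![1, w] = w.re * z.im - w.im * z.re := by
          rw [upperEdgeForm_one, Complex.mul_im, Complex.conj_re, Complex.conj_im]
          ring
      _ = -(‖w‖ * ‖z‖ * Real.sin (w.arg - z.arg)) := by
          rw [← Complex.norm_mul_cos_arg, ← Complex.norm_mul_sin_arg, ← Complex.norm_mul_cos_arg,
            ← Complex.norm_mul_sin_arg, Real.sin_sub]
          ring
  rw [hpolar, neg_lt_zero]
  positivity

/-- `M` expands the sector `0 ≤ arg w ≤ arg z` of slopes: the pair of edge forms at `M v` dominates
the comparison matrix `!![a, b; b * ‖z‖ ^ 2, a]` applied to the pair at `v`, strictly in the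
direction of the bisector. The Perron eigenvalue of the comparison matrix is `a + b * ‖z‖`. -/
structure SectorExpanding (z : ℂ) (a b : ℝ) (M : Matrix (Fin 2) (Fin 2) ℂ) : Prop where
  diag_pos : 0 < a
  offDiag_nonneg : 0 ≤ b
  lower_le (v : Fin 2 → ℂ) : a * lowerEdgeForm v + b * upperEdgeForm z v ≤ lowerEdgeForm (M *ᵥ v)
  upper_le (v : Fin 2 → ℂ) :
    b * ‖z‖ ^ 2 * lowerEdgeForm v + a * upperEdgeForm z v ≤ upperEdgeForm z (M *ᵥ v)
  bisector_lt {v : Fin 2 → ℂ} (hv : v ≠ 0) :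
    (a + b * ‖z‖) * bisectorForm z v < bisectorForm z (M *ᵥ v)

namespace SectorExpanding

variable {z : ℂ} {a b a' b' : ℝ} {M N : Matrix (Fin 2) (Fin 2) ℂ}

theorem mul (hM : SectorExpanding z a b M) (hN : SectorExpanding z a' b' N) :
    SectorExpanding z (a * a' + b * b' * ‖z‖ ^ 2) (a * b' + b * a') (M * N) where
  diag_pos := add_pos_of_pos_of_nonneg (mul_pos hM.diag_pos hN.diag_pos)
    (mul_nonneg (mul_nonneg hM.offDiag_nonneg hN.offDiag_nonneg) (sq_nonneg _))
  offDiag_nonneg := add_nonneg (mul_nonneg hM.diag_pos.le hN.offDiag_nonneg)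
    (mul_nonneg hM.offDiag_nonneg hN.diag_pos.le)
  lower_le v := by
    rw [← mulVec_mulVec]
    have hl := mul_le_mul_of_nonneg_left (hN.lower_le v) hM.diag_pos.le
    have hu := mul_le_mul_of_nonneg_left (hN.upper_le v) hM.offDiag_nonneg
    linear_combination hM.lower_le (N *ᵥ v) + hl + hu
  upper_le v := by
    rw [← mulVec_mulVec]
    have hl := mul_le_mul_of_nonneg_left (hN.lower_le v)
      (mul_nonneg hM.offDiag_nonneg (sq_nonneg ‖z‖))
    have hu := mul_le_mul_of_nonneg_left (hN.upper_le v) hM.diag_pos.le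
    linear_combination hM.upper_le (N *ᵥ v) + hl + hu
  bisector_lt {v} hv := by
    have ht : 0 < a + b * ‖z‖ :=
      add_pos_of_pos_of_nonneg hM.diag_pos (mul_nonneg hM.offDiag_nonneg (norm_nonneg z))
    calc (a * a' + b * b' * ‖z‖ ^ 2 + (a * b' + b * a') * ‖z‖) * bisectorForm z v
        = (a + b * ‖z‖) * ((a' + b' * ‖z‖) * bisectorForm z v) := by ring
      _ < (a + b * ‖z‖) * bisectorForm z (N *ᵥ v) := by gcongr; exact hN.bisector_lt hv
      _ ≤ bisectorForm z (M *ᵥ N *ᵥ v) := by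
        have hl := mul_le_mul_of_nonneg_left (hM.lower_le (N *ᵥ v)) (norm_nonneg z)
        simp only [bisectorForm]
        linear_combination hl + hM.upper_le (N *ᵥ v)
      _ = bisectorForm z ((M * N) *ᵥ v) := by rw [mulVec_mulVec]

theorem of_pos_weights (hz : 0 < z.im) {p q r s : ℝ} (hp : 0 < p) (hq : 0 < q) (hr : 0 < r)
    (hs : 0 < s) : SectorExpanding z (p * s) (q * r) !![(p : ℂ), q; r * z, s] := by
  have hlower (v : Fin 2 → ℂ) : lowerEdgeForm (!![(p : ℂ), q; r * z, s] *ᵥ v) =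
      p * s * lowerEdgeForm v + q * r * upperEdgeForm z v + p * r * z.im * ‖v 0‖ ^ 2 := by
    simp only [lowerEdgeForm, upperEdgeForm, mulVec, dotProduct, Fin.sum_univ_two, of_apply,
      cons_val', cons_val_fin_one, cons_val_zero, cons_val_one, map_add, map_mul,
      Complex.conj_ofReal, Complex.add_re, Complex.add_im, Complex.mul_re, Complex.mul_im,
      Complex.ofReal_re, Complex.ofReal_im, Complex.conj_re, Complex.conj_im,
      ← Complex.normSq_eq_norm_sq, Complex.normSq_apply]
    ring
  have hupper (v : Fin 2 → ℂ) : upperEdgeForm z (!![(p : ℂ), q; r * z, s] *ᵥ v) =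
      q * r * ‖z‖ ^ 2 * lowerEdgeForm v + p * s * upperEdgeForm z v
        + q * s * z.im * ‖v 1‖ ^ 2 := by
    simp only [lowerEdgeForm, upperEdgeForm, mulVec, dotProduct, Fin.sum_univ_two, of_apply,
      cons_val', cons_val_fin_one, cons_val_zero, cons_val_one, map_add, map_mul,
      Complex.conj_ofReal, Complex.add_re, Complex.add_im, Complex.mul_re, Complex.mul_im,
      Complex.ofReal_re, Complex.ofReal_im, Complex.conj_re, Complex.conj_im,
      ← Complex.normSq_eq_norm_sq, Complex.normSq_apply]
    ring
  refine ⟨by positivity, by positivity, fun v => ?_, fun v => ?_, fun {v} hv => ?_⟩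
  · rw [hlower]
    exact le_add_of_nonneg_right (by positivity)
  · rw [hupper]
    exact le_add_of_nonneg_right (by positivity)
  · have hgain : 0 < ‖z‖ * (p * r * z.im * ‖v 0‖ ^ 2) + q * s * z.im * ‖v 1‖ ^ 2 := by
      have hz₀ : z ≠ 0 := by
        rintro rfl
        simp at hz
      obtain ⟨i, hi⟩ := Function.ne_iff.1 hv
      rw [Pi.zero_apply] at hi
      fin_cases i <;> positivity
    simp only [bisectorForm, hlower, hupper]
    linear_combination hgain

theorem apply_zero_one_ne_zero (hM : SectorExpanding z a b M) : M 0 1 ≠ 0 := by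
  intro h
  have h01 : (![0, 1] : Fin 2 → ℂ) ≠ 0 := by simp
  simpa [bisectorForm, lowerEdgeForm, upperEdgeForm, mulVec, dotProduct, Fin.sum_univ_two, h]
    using hM.bisector_lt h01

section Eigenvector

variable {c c' w w' : ℂ} {v : Fin 2 → ℂ}

theorem mul_bisectorForm_pos (hM : SectorExpanding z a b M) (hv : v ≠ 0)
    (hc : M *ᵥ v = c • v) : 0 < (‖c‖ ^ 2 - (a + b * ‖z‖)) * bisectorForm z v := by
  have h := hM.bisector_lt hv
  rw [hc, bisectorForm_smul] at h
  linear_combination h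

theorem edgeForms_nonneg (hM : SectorExpanding z a b M) (hc : M *ᵥ v = c • v)
    (hlt : a + b * ‖z‖ < ‖c‖ ^ 2) : 0 ≤ lowerEdgeForm v ∧ 0 ≤ upperEdgeForm z v := by
  have hl := hM.lower_le v
  have hu := hM.upper_le v
  rw [hc, lowerEdgeForm_smul] at hl
  rw [hc, upperEdgeForm_smul] at hu
  set d := ‖c‖ ^ 2 - a
  have hb := hM.offDiag_nonneg
  have hbz : b * ‖z‖ < d := by linarith
  have hd₀ : 0 ≤ d := (mul_nonneg hb (norm_nonneg z)).trans hbz.le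
  have hdet : 0 < d ^ 2 - (b * ‖z‖) ^ 2 :=
    sub_pos.2 (pow_lt_pow_left₀ hbz (by positivity) two_ne_zero)
  have hl' : 0 ≤ d * lowerEdgeForm v - b * upperEdgeForm z v := by linear_combination hl
  have hu' : 0 ≤ d * upperEdgeForm z v - b * ‖z‖ ^ 2 * lowerEdgeForm v := by
    linear_combination hu
  -- The adjugate of `!![d, -b; -b * ‖z‖ ^ 2, d]` is nonnegative and its determinant is positive.
  refine ⟨nonneg_of_mul_nonneg_right (b := lowerEdgeForm v) ?_ hdet,
    nonneg_of_mul_nonneg_right (b := upperEdgeForm z v) ?_ hdet⟩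
  · linear_combination mul_nonneg hd₀ hl' + mul_nonneg hb hu'
  · linear_combination mul_nonneg hd₀ hu' + mul_nonneg (mul_nonneg hb (sq_nonneg ‖z‖)) hl'

theorem eigenvalues_separated (hM : SectorExpanding z a b M)
    (hM' : SectorExpanding z a b (reflectedAdjugate M)) (htr : c + c' = M.trace)
    (hw : M *ᵥ ![1, w] = c • ![1, w]) :
    (‖c‖ ^ 2 - (a + b * ‖z‖)) * (‖c'‖ ^ 2 - (a + b * ‖z‖)) < 0 := by
  have hpos := hM.mul_bisectorForm_pos (by simp) hw
  have hneg := hM'.mul_bisectorForm_pos (by simp) (reflectedAdjugate_mulVec hw htr)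
  rw [bisectorForm_one_neg] at hneg
  refine neg_of_mul_neg_left (b := bisectorForm z ![1, w] ^ 2) ?_ (sq_nonneg _)
  linear_combination mul_pos hpos hneg

end Eigenvector

end SectorExpanding

/-- `M` and its reflected adjugate expand the sector with the same comparison matrix. -/
def TwoSidedSectorExpanding (z : ℂ) (M : Matrix (Fin 2) (Fin 2) ℂ) : Prop :=
  ∃ a b : ℝ, SectorExpanding z a b M ∧ SectorExpanding z a b (reflectedAdjugate M)

namespace TwoSidedSectorExpanding

variable {z : ℂ}

theorem mul {M N : Matrix (Fin 2) (Fin 2) ℂ} (hM : TwoSidedSectorExpanding z M)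
    (hN : TwoSidedSectorExpanding z N) : TwoSidedSectorExpanding z (M * N) := by
  obtain ⟨a, b, hM, hM'⟩ := hM
  obtain ⟨a', b', hN, hN'⟩ := hN
  refine ⟨_, _, hM.mul hN, ?_⟩
  rw [reflectedAdjugate_mul]
  convert hN'.mul hM' using 1 <;> ring

theorem of_pos_weights (hz : 0 < z.im) {p q r s : ℝ} (hp : 0 < p) (hq : 0 < q) (hr : 0 < r)
    (hs : 0 < s) : TwoSidedSectorExpanding z !![(p : ℂ), q; r * z, s] :=
  ⟨p * s, q * r, .of_pos_weights hz hp hq hr hs,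
    mul_comm s p ▸ .of_pos_weights hz hs hq hr hp⟩

theorem exists_eigenvectors {M : Matrix (Fin 2) (Fin 2) ℂ} (h : TwoSidedSectorExpanding z M) :
    ∃ c c' w w' : ℂ, M *ᵥ ![1, w] = c • ![1, w] ∧ M *ᵥ ![1, w'] = c' • ![1, w'] ∧
      0 < bisectorForm z ![1, w] ∧ bisectorForm z ![1, w'] < 0 ∧
      (0 ≤ lowerEdgeForm ![1, w] ∧ 0 ≤ upperEdgeForm z ![1, w]) ∧
      0 ≤ lowerEdgeForm ![1, -w'] ∧ 0 ≤ upperEdgeForm z ![1, -w'] := by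
  obtain ⟨a, b, hM, hM'⟩ := h
  obtain ⟨c, c', w, w', htr, hw, hw'⟩ :=
    exists_eigenvectors_of_apply_zero_one_ne_zero hM.apply_zero_one_ne_zero
  have hsep := hM.eigenvalues_separated hM' htr hw
  wlog hc : a + b * ‖z‖ < ‖c‖ ^ 2 generalizing c c' w w'
  · have hc' := sub_pos.1 (pos_of_mul_neg_right hsep (sub_nonpos.2 (not_lt.1 hc)))
    exact this c' c w' w (by rwa [add_comm]) hw' hw (by rwa [mul_comm]) hc'
  have hc' := neg_of_mul_neg_right hsep (sub_pos.2 hc).le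
  refine ⟨c, c', w, w', hw, hw', ?_, ?_, hM.edgeForms_nonneg hw hc, hM'.edgeForms_nonneg
    (reflectedAdjugate_mulVec hw' (by rwa [add_comm])) hc⟩
  · exact pos_of_mul_pos_right (hM.mul_bisectorForm_pos (by simp) hw) (sub_pos.2 hc).le
  · exact neg_of_mul_pos_right (hM.mul_bisectorForm_pos (by simp) hw') hc'.le

end TwoSidedSectorExpanding

theorem aztecA_eq_mul {a b : ℝ} (ha : a ≠ 0) (hb : b ≠ 0) (z : ℂ) :
    aztecA a b z = !![((1 : ℝ) : ℂ), (a : ℝ); (a⁻¹ : ℝ) * z, (1 : ℝ)] *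
      !![((a / b : ℝ) : ℂ), (a : ℝ); (a⁻¹ : ℝ) * z, (b / a : ℝ)] := by
  have ha' : (a : ℂ) ≠ 0 := by exact_mod_cast ha
  have hb' : (b : ℂ) ≠ 0 := by exact_mod_cast hb
  ext i j
  fin_cases i <;> fin_cases j <;>
    simp [aztecA, mul_apply, Fin.sum_univ_two] <;> field_simp <;> ring

theorem twoSidedSectorExpanding_aztecA {z : ℂ} (hz : 0 < z.im) {a b : ℝ} (ha : 0 < a)
    (hb : 0 < b) : TwoSidedSectorExpanding z (aztecA a b z) := by
  rw [aztecA_eq_mul ha.ne' hb.ne']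
  exact .mul (.of_pos_weights hz one_pos ha (inv_pos.2 ha) one_pos)
    (.of_pos_weights hz (div_pos ha hb) ha (inv_pos.2 ha) (div_pos hb ha))

theorem twoSidedSectorExpanding_aztecT {k : ℕ} (hk : k ≠ 0) {α β : Fin k → ℝ}
    (hα : ∀ m, 0 < α m) (hβ : ∀ m, 0 < β m) {z : ℂ} (hz : 0 < z.im) :
    TwoSidedSectorExpanding z (aztecT α β z) := by
  refine List.prod_induction_nonempty _ (fun _ _ => .mul) ?_ fun M hM => ?_
  · simpa only [ne_eq, List.ofFn_eq_nil_iff] using hk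
  · obtain ⟨m, rfl⟩ := List.mem_ofFn.1 hM
    exact twoSidedSectorExpanding_aztecA hz (hα m) (hβ m)

/-- for `Im z > 0` there are nonzero `z₀, z̃₀` with `(1, z₀)` and `(1, z̃₀)`
eigenvectors of `T(z)`, `0 ≤ arg z₀ ≤ arg z` and `0 ≤ arg(−z̃₀) ≤ arg z`; in particular
`z₀ ≠ z̃₀`, the two eigenvectors are linearly independent (so `T(z)` is diagonalizable)
and `T(z)` is not a scalar multiple of the identity. -/
theorem stmt12 (k : ℕ) (hk : 1 ≤ k) (α β : Fin k → ℝ)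
    (hα : ∀ m, 0 < α m) (hβ : ∀ m, 0 < β m)
    (z : ℂ) (hz : 0 < z.im) :
    ∃ z₀ z₁ : ℂ, z₀ ≠ 0 ∧ z₁ ≠ 0 ∧
      (∃ μ : ℂ, (aztecT α β z).mulVec ![1, z₀] = μ • ![1, z₀]) ∧
      (∃ μ : ℂ, (aztecT α β z).mulVec ![1, z₁] = μ • ![1, z₁]) ∧
      0 ≤ z₀.arg ∧ z₀.arg ≤ z.arg ∧
      0 ≤ (-z₁).arg ∧ (-z₁).arg ≤ z.arg ∧
      z₀ ≠ z₁ ∧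
      LinearIndependent ℂ ![(![1, z₀] : Fin 2 → ℂ), ![1, z₁]] ∧
      ∀ c : ℂ, aztecT α β z ≠ c • (1 : Matrix (Fin 2) (Fin 2) ℂ) := by
  have hT := twoSidedSectorExpanding_aztecT (Nat.one_le_iff_ne_zero.1 hk) hα hβ hz
  obtain ⟨c, c', w, w', hw, hw', hpos, hneg, ⟨hl, hu⟩, hl', hu'⟩ := hT.exists_eigenvectors
  have hw₀ : w ≠ 0 := ne_zero_of_bisectorForm_ne_zero hpos.ne'
  have hw₀' : w' ≠ 0 := ne_zero_of_bisectorForm_ne_zero hneg.ne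
  have hne : w ≠ w' := by
    rintro rfl
    exact hpos.not_gt hneg
  obtain ⟨harg₀, harg⟩ := arg_mem_Icc_of_edgeForms_nonneg hz hw₀ hl hu
  obtain ⟨harg₀', harg'⟩ := arg_mem_Icc_of_edgeForms_nonneg hz (neg_ne_zero.2 hw₀') hl' hu'
  refine ⟨w, w', hw₀, hw₀', ⟨c, hw⟩, ⟨c', hw'⟩, harg₀, harg, harg₀', harg', hne,
    linearIndependent_one_pair hne, fun d hd => ?_⟩
  obtain ⟨_, _, hexp, -⟩ := hT
  apply hexp.apply_zero_one_ne_zero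
  simp [hd]
end

section
/- For every x ∈ S = (0,1) ∪ (1,∞), the derivative at x of the function y ↦ y·ρ′(y)/ρ(y) + k/(y−1) is strictly positive. -/
open Polynomial Matrix

open Filter Topology

/-!
Since `y ρ′ / ρ + k / (y - 1)` differs by the constant `k` from the logarithmic derivative
`θ log l`, where `θ = y d/dy` and `l = (y - 1) ^ k ρ` is the Perron eigenvalue of the positive
matrix `T(y)`, the claim is that `log l` is strictly convex as a function of `log y`. Products and
sums preserve this kind of convexity, so the entries of `T` inherit it from those of the factors
`A_m`. It passes from the entries to the Perron eigenvalue, a second-order form of Kingman's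
theorem, through the two decompositions `l = T₀₀ + (l - T₀₀) = T₁₁ + (l - T₁₁)`, whose gaps have the
product `(l - T₀₀) (l - T₁₁) = T₀₁ T₁₀`.
-/

/-- The derivative of `y ↦ y f′(y) / f(y)`. Up to a factor `x` it is the second derivative of
`t ↦ log f(eᵗ)` at `eᵗ = x`, so for `x > 0` its sign is that of the curvature of `log f` as a
function of `log x`. -/
noncomputable def logLogCurvature (f : ℝ → ℝ) (x : ℝ) : ℝ :=
  deriv (fun y => y * logDeriv f y) x

section Curvature

variable {f g : ℝ → ℝ} {x : ℝ}

theorem logLogCurvature_congr (h : f =ᶠ[𝓝 x] g) : logLogCurvature f x = logLogCurvature g x :=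
  ((EventuallyEq.refl _ id).mul (logDeriv_congr_nhds h)).deriv_eq

theorem hasDerivAt_mul_logDeriv (hf : ContDiffAt ℝ 2 f x) (hf₀ : f x ≠ 0) :
    HasDerivAt (fun y => y * logDeriv f y)
      (logDeriv f x + x * (iteratedDeriv 2 f x / f x - logDeriv f x ^ 2)) x := by
  have hf' : HasDerivAt f (deriv f x) x := (hf.differentiableAt two_ne_zero).hasDerivAt
  have hf'' : HasDerivAt (deriv f) (iteratedDeriv 2 f x) x := by
    rw [iteratedDeriv_succ, iteratedDeriv_one]
    exact ((hf.derivWithin le_rfl).differentiableAt one_ne_zero).hasDerivAt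
  refine ((hasDerivAt_id x).mul (hf''.div hf' hf₀)).congr_deriv ?_
  simp only [logDeriv_apply, id, Pi.div_apply]
  field_simp

theorem logLogCurvature_eq (hf : ContDiffAt ℝ 2 f x) (hf₀ : f x ≠ 0) :
    logLogCurvature f x =
      logDeriv f x + x * (iteratedDeriv 2 f x / f x - logDeriv f x ^ 2) :=
  (hasDerivAt_mul_logDeriv hf hf₀).deriv

theorem logLogCurvature_mul (hf : ContDiffAt ℝ 2 f x) (hg : ContDiffAt ℝ 2 g x) (hf₀ : f x ≠ 0)
    (hg₀ : g x ≠ 0) :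
    logLogCurvature (fun y => f y * g y) x = logLogCurvature f x + logLogCurvature g x := by
  have heq : (fun y => y * logDeriv (fun z => f z * g z) y) =ᶠ[𝓝 x]
      fun y => y * logDeriv f y + y * logDeriv g y := by
    filter_upwards [hf.continuousAt.eventually_ne hf₀, hg.continuousAt.eventually_ne hg₀,
      hf.eventually (by simp), hg.eventually (by simp)] with y hfy hgy hf' hg'
    rw [logDeriv_mul y hfy hgy (hf'.differentiableAt two_ne_zero)
      (hg'.differentiableAt two_ne_zero), mul_add]
  rw [logLogCurvature, heq.deriv_eq]
  exact deriv_fun_add (hasDerivAt_mul_logDeriv hf hf₀).differentiableAt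
    (hasDerivAt_mul_logDeriv hg hg₀).differentiableAt

theorem logLogCurvature_add (hf : ContDiffAt ℝ 2 f x) (hg : ContDiffAt ℝ 2 g x) (hf₀ : f x ≠ 0)
    (hg₀ : g x ≠ 0) (hfg : f x + g x ≠ 0) :
    (f x + g x) * logLogCurvature (fun y => f y + g y) x =
      f x * logLogCurvature f x + g x * logLogCurvature g x +
        x * (f x * g x / (f x + g x)) * (logDeriv f x - logDeriv g x) ^ 2 := by
  rw [logLogCurvature_eq hf hf₀, logLogCurvature_eq hg hg₀, logLogCurvature_eq (hf.add hg) hfg,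
    iteratedDeriv_fun_add hf hg]
  simp only [logDeriv_apply, deriv_fun_add (hf.differentiableAt two_ne_zero)
    (hg.differentiableAt two_ne_zero)]
  field_simp
  ring

theorem le_logLogCurvature_add (hx : 0 ≤ x) (hf : ContDiffAt ℝ 2 f x) (hg : ContDiffAt ℝ 2 g x)
    (hf₀ : 0 < f x) (hg₀ : 0 < g x) :
    f x * logLogCurvature f x + g x * logLogCurvature g x ≤
      (f x + g x) * logLogCurvature (fun y => f y + g y) x := by
  rw [logLogCurvature_add hf hg hf₀.ne' hg₀.ne' (by positivity)]
  exact le_add_of_nonneg_right (by positivity)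

theorem le_logLogCurvature_sum {ι : Type*} {s : Finset ι} {f : ι → ℝ → ℝ} (hs : s.Nonempty)
    (hx : 0 ≤ x) (hf : ∀ i ∈ s, ContDiffAt ℝ 2 (f i) x) (hf₀ : ∀ i ∈ s, 0 < f i x) :
    ∑ i ∈ s, f i x * logLogCurvature (f i) x ≤
      (∑ i ∈ s, f i x) * logLogCurvature (fun y => ∑ i ∈ s, f i y) x := by
  induction hs using Finset.Nonempty.cons_induction with
  | singleton i => simp only [Finset.sum_singleton, le_refl]
  | cons i s hi hs ih =>
    simp only [Finset.forall_mem_cons] at hf hf₀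
    simp only [Finset.sum_cons]
    exact (add_le_add_right (ih hf.2 hf₀.2) _).trans <|
      le_logLogCurvature_add hx hf.1 (ContDiffAt.sum hf.2) hf₀.1 (Finset.sum_pos hf₀.2 hs)

theorem logLogCurvature_sub_pow (c : ℝ) (k : ℕ) (hx : x ≠ c) :
    logLogCurvature (fun y => (y - c) ^ k) x = deriv (fun y => c * k / (y - c)) x := by
  have heq : (fun y => y * logDeriv (fun z => (z - c) ^ k) y) =ᶠ[𝓝 x]
      fun y => k + c * k / (y - c) := by
    filter_upwards [eventually_ne_nhds hx] with y hy
    have hyc : y - c ≠ 0 := sub_ne_zero.2 hy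
    rw [logDeriv_fun_pow (by fun_prop), logDeriv_apply, deriv_sub_const, deriv_id'']
    field_simp
    ring
  rw [logLogCurvature, heq.deriv_eq, deriv_const_add]

theorem logLogCurvature_sub_one_pow_mul (k : ℕ) (hx : x ≠ 1) (hf : ContDiffAt ℝ 2 f x)
    (hf₀ : f x ≠ 0) :
    logLogCurvature (fun y => (y - 1) ^ k * f y) x =
      deriv (fun y => y * deriv f y / f y + k / (y - 1)) x := by
  have hx₁ : x - 1 ≠ 0 := sub_ne_zero.2 hx
  have hdiv : DifferentiableAt ℝ (fun y : ℝ => k / (y - 1)) x := by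
    fun_prop (disch := assumption)
  have hpow := logLogCurvature_sub_pow 1 k hx
  simp only [one_mul] at hpow
  simp only [mul_div_assoc, ← logDeriv_apply]
  rw [deriv_fun_add (hasDerivAt_mul_logDeriv hf hf₀).differentiableAt hdiv, ← hpow,
    ← logLogCurvature, add_comm]
  exact logLogCurvature_mul (by fun_prop) hf (pow_ne_zero k hx₁) hf₀

end Curvature

/-- `f` is positive and twice continuously differentiable at `x`, and `log f` is convex to second
order at `x` as a function of `log x`. -/
structure LogLogConvexAt (f : ℝ → ℝ) (x : ℝ) : Prop where
  contDiffAt : ContDiffAt ℝ 2 f x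
  pos : 0 < f x
  curvature_nonneg : 0 ≤ logLogCurvature f x

section LogLogConvexAt

variable {f g : ℝ → ℝ} {x : ℝ}

theorem logLogConvexAt_const {c : ℝ} (hc : 0 < c) : LogLogConvexAt (fun _ => c) x where
  contDiffAt := contDiffAt_const
  pos := hc
  curvature_nonneg := by simp [logLogCurvature]

theorem logLogConvexAt_id (hx : 0 < x) : LogLogConvexAt (fun y => y) x where
  contDiffAt := contDiffAt_fun_id
  pos := hx
  curvature_nonneg := by simpa using (logLogCurvature_sub_pow 0 1 hx.ne').ge

theorem LogLogConvexAt.mul (hf : LogLogConvexAt f x) (hg : LogLogConvexAt g x) :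
    LogLogConvexAt (fun y => f y * g y) x where
  contDiffAt := hf.contDiffAt.mul hg.contDiffAt
  pos := mul_pos hf.pos hg.pos
  curvature_nonneg := by
    rw [logLogCurvature_mul hf.contDiffAt hg.contDiffAt hf.pos.ne' hg.pos.ne']
    exact add_nonneg hf.curvature_nonneg hg.curvature_nonneg

theorem LogLogConvexAt.sum {ι : Type*} {s : Finset ι} {f : ι → ℝ → ℝ} (hs : s.Nonempty)
    (hx : 0 ≤ x) (hf : ∀ i ∈ s, LogLogConvexAt (f i) x) :
    LogLogConvexAt (fun y => ∑ i ∈ s, f i y) x where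
  contDiffAt := ContDiffAt.sum fun i hi => (hf i hi).contDiffAt
  pos := Finset.sum_pos (fun i hi => (hf i hi).pos) hs
  curvature_nonneg := by
    refine nonneg_of_mul_nonneg_right ((Finset.sum_nonneg fun i hi => ?_).trans
      (le_logLogCurvature_sum hs hx (fun i hi => (hf i hi).contDiffAt) fun i hi => (hf i hi).pos))
      (Finset.sum_pos (fun i hi => (hf i hi).pos) hs)
    exact mul_nonneg (hf i hi).pos.le (hf i hi).curvature_nonneg

theorem logLogCurvature_sum_pos {ι : Type*} {s : Finset ι} {f : ι → ℝ → ℝ} {i : ι} (hi : i ∈ s)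
    (hx : 0 ≤ x) (hf : ∀ i ∈ s, LogLogConvexAt (f i) x) (hfi : 0 < logLogCurvature (f i) x) :
    0 < logLogCurvature (fun y => ∑ i ∈ s, f i y) x := by
  have hle := le_logLogCurvature_sum ⟨i, hi⟩ hx (fun i hi => (hf i hi).contDiffAt)
    fun i hi => (hf i hi).pos
  refine pos_of_mul_pos_right (lt_of_lt_of_le ?_ hle)
    (Finset.sum_nonneg fun i hi => (hf i hi).pos.le)
  exact Finset.sum_pos' (fun j hj => mul_nonneg (hf j hj).pos.le (hf j hj).curvature_nonneg)
    ⟨i, hi, mul_pos (hf i hi).pos hfi⟩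

theorem logLogCurvature_add_const_pos {c : ℝ} (hx : 0 < x) (hc : 0 < c) :
    0 < logLogCurvature (fun y => y + c) x := by
  have hc' := logLogConvexAt_const (x := x) hc
  have hid := logLogConvexAt_id hx
  refine pos_of_mul_pos_right (a := x + c) ?_ (by positivity)
  rw [logLogCurvature_add hid.contDiffAt hc'.contDiffAt hx.ne' hc.ne' (by positivity)]
  have := hid.curvature_nonneg
  have := hc'.curvature_nonneg
  simp only [logDeriv_id', logDeriv_const, Pi.zero_apply, sub_zero]
  positivity

theorem logLogConvexAt_add_const {c : ℝ} (hx : 0 < x) (hc : 0 < c) :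
    LogLogConvexAt (fun y => y + c) x where
  contDiffAt := by fun_prop
  pos := by positivity
  curvature_nonneg := (logLogCurvature_add_const_pos hx hc).le

end LogLogConvexAt

/-- All entries of the matrix-valued function `M` are log-log-convex at `x`, the diagonal ones
strictly so. Strictness is only asked of the diagonal because it is absent off the diagonal of
`aztecA`, whereas for the diagonal it survives products. -/
structure EntrywiseLogLogConvexAt {n : Type*} (M : ℝ → Matrix n n ℝ) (x : ℝ) : Prop where
  entry : ∀ i j, LogLogConvexAt (fun y => M y i j) x
  diag_curvature_pos : ∀ i, 0 < logLogCurvature (fun y => M y i i) x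

section EntrywiseLogLogConvexAt

variable {n : Type*} [Fintype n] {x : ℝ}

theorem EntrywiseLogLogConvexAt.mul {M N : ℝ → Matrix n n ℝ} (hx : 0 ≤ x)
    (hM : EntrywiseLogLogConvexAt M x) (hN : EntrywiseLogLogConvexAt N x) :
    EntrywiseLogLogConvexAt (M * N) x where
  entry i j := by
    simp only [Pi.mul_apply, Matrix.mul_apply]
    exact .sum ⟨i, Finset.mem_univ i⟩ hx fun l _ => (hM.entry i l).mul (hN.entry l j)
  diag_curvature_pos i := by
    simp only [Pi.mul_apply, Matrix.mul_apply]
    refine logLogCurvature_sum_pos (Finset.mem_univ i) hx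
      (fun l _ => (hM.entry i l).mul (hN.entry l i)) ?_
    rw [logLogCurvature_mul (hM.entry i i).contDiffAt (hN.entry i i).contDiffAt
      (hM.entry i i).pos.ne' (hN.entry i i).pos.ne']
    exact add_pos (hM.diag_curvature_pos i) (hN.diag_curvature_pos i)

theorem EntrywiseLogLogConvexAt.trace_pos [Nonempty n] {M : ℝ → Matrix n n ℝ}
    (hM : EntrywiseLogLogConvexAt M x) : 0 < (M x).trace :=
  Finset.sum_pos (fun i _ => (hM.entry i i).pos) Finset.univ_nonempty

theorem EntrywiseLogLogConvexAt.list_prod [DecidableEq n] {L : List (ℝ → Matrix n n ℝ)}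
    (hL : L ≠ []) (hx : 0 ≤ x) (h : ∀ M ∈ L, EntrywiseLogLogConvexAt M x) :
    EntrywiseLogLogConvexAt L.prod x :=
  L.prod_induction_nonempty (EntrywiseLogLogConvexAt · x) (fun _ _ => .mul hx) hL h

end EntrywiseLogLogConvexAt

section TwoByTwo

variable {R : Type*} [CommRing R]

theorem isRoot_charpoly_fin_two_iff [Nontrivial R] {M : Matrix (Fin 2) (Fin 2) R} {l : R} :
    M.charpoly.IsRoot l ↔ (l - M 0 0) * (l - M 1 1) = M 0 1 * M 1 0 := by
  simp only [IsRoot.def, charpoly_fin_two, trace_fin_two, det_fin_two, eval_add, eval_sub, eval_mul,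
    eval_pow, eval_X, eval_C]
  constructor <;> intro h <;> linear_combination h

theorem isRoot_charpoly_of_det_eq_sq [Nontrivial R] {M : Matrix (Fin 2) (Fin 2) R} {D r : R}
    (hdet : M.det = D ^ 2) (hr : D * r ^ 2 - M.trace * r + D = 0) :
    M.charpoly.IsRoot (D * r) := by
  simp only [IsRoot.def, charpoly_fin_two, hdet, eval_add, eval_sub, eval_mul, eval_pow, eval_X,
    eval_C]
  linear_combination D * hr

variable [LinearOrder R] [IsStrictOrderedRing R]

-- The roots of the quadratic are `r` and `r⁻¹`, so `t` is the sum of `D r` and the smaller `D r⁻¹`.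
theorem lt_two_mul_of_reciprocal_quadratic {D r t : R} (ht : 0 < t) (hr : D * r ^ 2 - t * r + D = 0)
    (habs : 1 < |r|) : t < 2 * (D * r) := by
  have hr₁ : 0 < r ^ 2 - 1 := sub_pos.2 ((one_lt_sq_iff_one_lt_abs r).2 habs)
  have h : (2 * (D * r) - t) * (r ^ 2 + 1) = t * (r ^ 2 - 1) := by
    linear_combination 2 * r * hr
  exact sub_pos.1 (pos_of_mul_pos_left (h ▸ mul_pos ht hr₁) (by positivity))

theorem diag_lt_of_isRoot_charpoly {M : Matrix (Fin 2) (Fin 2) R} {l : R} (h₀₁ : 0 < M 0 1)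
    (h₁₀ : 0 < M 1 0) (hroot : M.charpoly.IsRoot l) (hl : M.trace < 2 * l) :
    ∀ i, M i i < l := by
  rw [isRoot_charpoly_fin_two_iff] at hroot
  rw [trace_fin_two] at hl
  rcases pos_and_pos_or_neg_and_neg_of_mul_pos (hroot ▸ mul_pos h₀₁ h₁₀) with h | h
  · simpa [Fin.forall_fin_two] using h
  · linarith

end TwoByTwo

theorem EntrywiseLogLogConvexAt.logLogCurvature_eigenvalue_pos {M : ℝ → Matrix (Fin 2) (Fin 2) ℝ}
    {l : ℝ → ℝ} {x : ℝ} (hx : 0 ≤ x) (hM : EntrywiseLogLogConvexAt M x) (hl : ContDiffAt ℝ 2 l x)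
    (hroot : ∀ᶠ y in 𝓝 x, (M y).charpoly.IsRoot (l y)) (hlt : ∀ i, M x i i < l x) :
    0 < logLogCurvature l x := by
  have hgap (i : Fin 2) : 0 < l x - M x i i := sub_pos.2 (hlt i)
  have hgapC (i : Fin 2) : ContDiffAt ℝ 2 (fun y => l y - M y i i) x :=
    hl.sub (hM.entry i i).contDiffAt
  have hdiag (i : Fin 2) : M x i i * logLogCurvature (fun y => M y i i) x +
      (l x - M x i i) * logLogCurvature (fun y => l y - M y i i) x ≤ l x * logLogCurvature l x := by
    simpa only [add_sub_cancel] using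
      le_logLogCurvature_add hx (hM.entry i i).contDiffAt (hgapC i) (hM.entry i i).pos (hgap i)
  have hoff : 0 ≤ logLogCurvature (fun y => l y - M y 0 0) x +
      logLogCurvature (fun y => l y - M y 1 1) x := by
    rw [← logLogCurvature_mul (hgapC 0) (hgapC 1) (hgap 0).ne' (hgap 1).ne',
      logLogCurvature_congr (hroot.mono fun y => isRoot_charpoly_fin_two_iff.1)]
    exact ((hM.entry 0 1).mul (hM.entry 1 0)).curvature_nonneg
  -- Weighting the two decompositions of `l` crosswise makes the curvatures of the gaps `l - M i i`,
  -- which have no individual sign, enter only through their sum.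
  have hsum : 0 < ((l x - M x 0 0) + (l x - M x 1 1)) * (l x * logLogCurvature l x) := by
    have h₀ := mul_le_mul_of_nonneg_left (hdiag 0) (hgap 1).le
    have h₁ := mul_le_mul_of_nonneg_left (hdiag 1) (hgap 0).le
    have h₂ := mul_nonneg (mul_pos (hgap 0) (hgap 1)).le hoff
    have h₃ := mul_pos (hgap 1) (mul_pos (hM.entry 0 0).pos (hM.diag_curvature_pos 0))
    have h₄ := mul_pos (hgap 0) (mul_pos (hM.entry 1 1).pos (hM.diag_curvature_pos 1))
    linarith
  exact pos_of_mul_pos_right (pos_of_mul_pos_right hsum (add_pos (hgap 0) (hgap 1)).le)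
    ((hM.entry 0 0).pos.trans (hlt 0)).le

/-- The matrix `aztecA a b` at a real argument, as a real matrix. -/
noncomputable def aztecAReal (a b x : ℝ) : Matrix (Fin 2) (Fin 2) ℝ :=
  !![x + a * b⁻¹, a + b; x * (a⁻¹ + b⁻¹), x + b * a⁻¹]

/-- The matrix `aztecT α β` at a real argument, as a real matrix; the product is taken in the ring
of matrix-valued functions. -/
noncomputable def aztecTReal {k : ℕ} (α β : Fin k → ℝ) : ℝ → Matrix (Fin 2) (Fin 2) ℝ :=
  (List.ofFn fun m => aztecAReal (α m) (β m)).prod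

theorem aztecA_ofReal (a b x : ℝ) :
    aztecA a b x = Complex.ofRealHom.mapMatrix (aztecAReal a b x) := by
  ext i j
  fin_cases i <;> fin_cases j <;> simp [aztecA, aztecAReal]

theorem aztecTReal_apply {k : ℕ} (α β : Fin k → ℝ) (x : ℝ) :
    aztecTReal α β x = (List.ofFn fun m => aztecAReal (α m) (β m) x).prod := by
  rw [aztecTReal, Pi.list_prod_apply, List.map_ofFn]
  rfl

theorem trace_aztecT_ofReal {k : ℕ} (α β : Fin k → ℝ) (x : ℝ) :
    (aztecT α β x).trace = ((aztecTReal α β x).trace : ℂ) := by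
  have h : aztecT α β x = Complex.ofRealHom.mapMatrix (aztecTReal α β x) := by
    rw [aztecTReal_apply, map_list_prod, List.map_ofFn]
    simp only [aztecT, aztecA_ofReal, Function.comp_def]
  rw [h]
  exact (AddMonoidHom.map_trace Complex.ofRealHom _).symm

theorem aztecT_quadratic_ofReal_iff {k : ℕ} {α β : Fin k → ℝ} {x r : ℝ} :
    ((x : ℂ) - 1) ^ k * (r : ℂ) ^ 2 - (aztecT α β x).trace * r + ((x : ℂ) - 1) ^ k = 0 ↔
      (x - 1) ^ k * r ^ 2 - (aztecTReal α β x).trace * r + (x - 1) ^ k = 0 := by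
  rw [trace_aztecT_ofReal]
  norm_cast

theorem det_aztecAReal {a b : ℝ} (ha : a ≠ 0) (hb : b ≠ 0) (x : ℝ) :
    (aztecAReal a b x).det = (x - 1) ^ 2 := by
  rw [aztecAReal, det_fin_two_of]
  field_simp
  ring

theorem det_aztecTReal {k : ℕ} {α β : Fin k → ℝ} (hα : ∀ m, α m ≠ 0) (hβ : ∀ m, β m ≠ 0) (x : ℝ) :
    (aztecTReal α β x).det = ((x - 1) ^ k) ^ 2 := by
  calc (aztecTReal α β x).det = ∏ m, (aztecAReal (α m) (β m) x).det := by
        rw [aztecTReal_apply, ← coe_detMonoidHom, map_list_prod, List.map_ofFn, List.prod_ofFn]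
        rfl
    _ = ((x - 1) ^ k) ^ 2 := by
        simp only [det_aztecAReal (hα _) (hβ _), Finset.prod_const, Finset.card_univ,
          Fintype.card_fin, pow_right_comm]

theorem entrywiseLogLogConvexAt_aztecAReal {a b x : ℝ} (ha : 0 < a) (hb : 0 < b) (hx : 0 < x) :
    EntrywiseLogLogConvexAt (aztecAReal a b) x where
  entry := by
    refine Fin.forall_fin_two.2 ⟨Fin.forall_fin_two.2 ⟨?_, ?_⟩, Fin.forall_fin_two.2 ⟨?_, ?_⟩⟩
    · exact logLogConvexAt_add_const hx (by positivity)
    · exact logLogConvexAt_const (add_pos ha hb)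
    · exact (logLogConvexAt_id hx).mul (logLogConvexAt_const (by positivity))
    · exact logLogConvexAt_add_const hx (by positivity)
  diag_curvature_pos := Fin.forall_fin_two.2
    ⟨logLogCurvature_add_const_pos hx (by positivity),
      logLogCurvature_add_const_pos hx (by positivity)⟩

theorem entrywiseLogLogConvexAt_aztecTReal {k : ℕ} (hk : k ≠ 0) {α β : Fin k → ℝ}
    (hα : ∀ m, 0 < α m) (hβ : ∀ m, 0 < β m) {x : ℝ} (hx : 0 < x) :
    EntrywiseLogLogConvexAt (aztecTReal α β) x := by
  refine .list_prod (by simpa using hk) hx.le ?_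
  simpa only [List.forall_mem_ofFn_iff] using fun m =>
    entrywiseLogLogConvexAt_aztecAReal (hα m) (hβ m) hx

theorem stmt14_general (k : ℕ) (hk : 1 ≤ k) (α β : Fin k → ℝ)
    (hα : ∀ m, 0 < α m) (hβ : ∀ m, 0 < β m)
    (ρ : ℝ → ℝ)
    (hsmooth : ContDiffOn ℝ 2 ρ (Set.Ioo 0 1 ∪ Set.Ioi 1))
    (heig : ∀ x ∈ Set.Ioo (0 : ℝ) 1 ∪ Set.Ioi (1 : ℝ),
        ((x : ℂ) - 1) ^ k * ((ρ x : ℝ) : ℂ) ^ 2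
          - Matrix.trace (aztecT α β (x : ℂ)) * ((ρ x : ℝ) : ℂ)
          + ((x : ℂ) - 1) ^ k = 0)
    (habs : ∀ x ∈ Set.Ioo (0 : ℝ) 1 ∪ Set.Ioi (1 : ℝ), 1 < |ρ x|) :
    ∀ x ∈ Set.Ioo (0 : ℝ) 1 ∪ Set.Ioi (1 : ℝ),
      0 < deriv (fun y : ℝ => y * deriv ρ y / ρ y + (k : ℝ) / (y - 1)) x := by
  intro x hx
  have hS : Set.Ioo (0 : ℝ) 1 ∪ Set.Ioi 1 ∈ 𝓝 x := (isOpen_Ioo.union isOpen_Ioi).mem_nhds hx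
  have hx₀ : 0 < x := hx.elim And.left fun h => one_pos.trans h
  have hx₁ : x ≠ 1 := hx.elim (fun h => h.2.ne) fun h => ne_of_gt h
  have hρ : ContDiffAt ℝ 2 ρ x := hsmooth.contDiffAt hS
  have hρ₀ : ρ x ≠ 0 := abs_pos.1 (one_pos.trans (habs x hx))
  have hquad (y : ℝ) (hy : y ∈ Set.Ioo (0 : ℝ) 1 ∪ Set.Ioi 1) :
      (y - 1) ^ k * ρ y ^ 2 - (aztecTReal α β y).trace * ρ y + (y - 1) ^ k = 0 :=
    aztecT_quadratic_ofReal_iff.1 (heig y hy)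
  have hroot (y : ℝ) (hy : y ∈ Set.Ioo (0 : ℝ) 1 ∪ Set.Ioi 1) :
      (aztecTReal α β y).charpoly.IsRoot ((y - 1) ^ k * ρ y) :=
    isRoot_charpoly_of_det_eq_sq (det_aztecTReal (fun m => (hα m).ne') (fun m => (hβ m).ne') y)
      (hquad y hy)
  have hT := entrywiseLogLogConvexAt_aztecTReal (Nat.one_le_iff_ne_zero.1 hk) hα hβ hx₀
  rw [← logLogCurvature_sub_one_pow_mul k hx₁ hρ hρ₀]
  exact hT.logLogCurvature_eigenvalue_pos hx₀.le (by fun_prop) (mem_of_superset hS hroot) <|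
    diag_lt_of_isRoot_charpoly (hT.entry 0 1).pos (hT.entry 1 0).pos (hroot x hx)
      (lt_two_mul_of_reciprocal_quadratic hT.trace_pos (hquad x hx) (habs x hx))

/-- on `S = (0,1) ∪ (1,∞)`, the function `y ↦ y ρ′(y)/ρ(y) + k/(y−1)` has
strictly positive derivative, where `ρ` is the large eigenvalue of `Φ` on `S`. -/
theorem stmt14 (k : ℕ) (hk : 1 ≤ k) (α β : Fin k → ℝ)
    (hα : ∀ m, 0 < α m) (hβ : ∀ m, 0 < β m)
    (hprod : ∏ m, α m = ∏ m, β m)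
    (ρ : ℝ → ℝ)
    (hsmooth : ContDiffOn ℝ 2 ρ (Set.Ioo 0 1 ∪ Set.Ioi 1))
    (heig : ∀ x ∈ Set.Ioo (0 : ℝ) 1 ∪ Set.Ioi (1 : ℝ),
        ((x : ℂ) - 1) ^ k * ((ρ x : ℝ) : ℂ) ^ 2
          - Matrix.trace (aztecT α β (x : ℂ)) * ((ρ x : ℝ) : ℂ)
          + ((x : ℂ) - 1) ^ k = 0)
    (habs : ∀ x ∈ Set.Ioo (0 : ℝ) 1 ∪ Set.Ioi (1 : ℝ), 1 < |ρ x|) :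
    ∀ x ∈ Set.Ioo (0 : ℝ) 1 ∪ Set.Ioi (1 : ℝ),
      0 < deriv (fun y : ℝ => y * deriv ρ y / ρ y + (k : ℝ) / (y - 1)) x :=
  stmt14_general k hk α β hα hβ ρ hsmooth heig habs
end
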